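/- Suppose that for every quadratic extension L/K of number fields, the image of 𝒪_K in 𝒪_L has a diophantine definition over 𝒪_L. Then for every number field M, the image of ℤ in 𝒪_M has a diophantine definition over 𝒪_M. -/

import Mathlib

/-- A subset `E` of a commutative ring `R` has a diophantine definition over `R` if there is a
finite system of polynomials `f₁, …, f_k ∈ R[t, x₁, …, x_n]` such that `τ ∈ E` iff the system
`fᵢ(τ, a₁, …, a_n) = 0` has a solution `a₁, …, a_n ∈ R`. -/
def IsDiophantineOver (R : Type*) [CommRing R] (E : Set R) : Prop :=
  ∃ (n k : ℕ) (f : Fin k → MvPolynomial (Fin (n + 1)) R),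
    ∀ τ : R, τ ∈ E ↔ ∃ a : Fin n → R, ∀ i, MvPolynomial.eval (Fin.cons τ a) (f i) = 0

/-!
Let `N` be the Galois closure of `M` over `ℚ`. Every complex embedding `φ` of `N` induces an
automorphism of `N` of order at most two, so by hypothesis `{x ∈ 𝓞 N | φ x is real}` is diophantine
over `𝓞 N`. The intersection over all `φ` is the ring of integers of the maximal real subfield of
`N`. That field is totally real, so `ℤ` is diophantine over its ring of integers by a theorem of
Denef, and hence over `𝓞 N`. Since `𝓞 N` is a finite projective module over `𝓞 M`, a polynomial
system over `𝓞 N` can be rewritten as one over `𝓞 M`.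

For Denef's theorem, choose `a` large at one real place and small at all others. Up to sign, the
solutions of `x ^ 2 - (a ^ 2 - 1) * y ^ 2 = 1` are the values of Chebyshev polynomials at `a`, so a
solution encodes an integer, its index. Divisibilities between solutions make `ξ` congruent to such
an index, up to sign, modulo a `z` whose norm is too large for `ξ` to differ from that integer. The
inequalities between conjugates that this uses are expressed by sums of squares.
-/

section PolynomialFunctions
variable {R α β κ : Type*} [CommRing R]

/-- `IsPolyFun g` says that the function `g` of a family of variables `v : α → R` is the
evaluation of a multivariate polynomial. -/
@[fun_prop]
def IsPolyFun (g : (α → R) → R) : Prop :=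
  ∃ p : MvPolynomial α R, ∀ v, g v = MvPolynomial.eval v p

namespace IsPolyFun

@[fun_prop]
theorem const (c : R) : IsPolyFun (fun _ : α → R ↦ c) := ⟨MvPolynomial.C c, by simp⟩

@[fun_prop]
theorem apply (i : α) : IsPolyFun (fun v : α → R ↦ v i) := ⟨MvPolynomial.X i, by simp⟩

variable {f g : (α → R) → R}

@[fun_prop]
theorem add (hf : IsPolyFun f) (hg : IsPolyFun g) : IsPolyFun (fun v ↦ f v + g v) := by
  obtain ⟨p, hp⟩ := hf
  obtain ⟨q, hq⟩ := hg
  exact ⟨p + q, by simp [hp, hq]⟩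

@[fun_prop]
theorem mul (hf : IsPolyFun f) (hg : IsPolyFun g) : IsPolyFun (fun v ↦ f v * g v) := by
  obtain ⟨p, hp⟩ := hf
  obtain ⟨q, hq⟩ := hg
  exact ⟨p * q, by simp [hp, hq]⟩

@[fun_prop]
theorem sub (hf : IsPolyFun f) (hg : IsPolyFun g) : IsPolyFun (fun v ↦ f v - g v) := by
  obtain ⟨p, hp⟩ := hf
  obtain ⟨q, hq⟩ := hg
  exact ⟨p - q, by simp [hp, hq]⟩

@[fun_prop]
theorem pow (hf : IsPolyFun f) (n : ℕ) : IsPolyFun (fun v ↦ f v ^ n) := by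
  obtain ⟨p, hp⟩ := hf
  exact ⟨p ^ n, by simp [hp]⟩

@[fun_prop]
theorem sum (s : Finset κ) {f : κ → (α → R) → R} (hf : ∀ k, IsPolyFun (f k)) :
    IsPolyFun (fun v ↦ ∑ k ∈ s, f k v) := by
  choose p hp using hf
  exact ⟨∑ k ∈ s, p k, by simp [hp]⟩

@[fun_prop]
theorem eval (p : MvPolynomial β R) {h : (α → R) → β → R} (hh : ∀ i, IsPolyFun (fun v ↦ h v i)) :
    IsPolyFun (fun v ↦ MvPolynomial.eval (h v) p) := by
  choose q hq using hh
  refine ⟨MvPolynomial.bind₁ q p, fun v ↦ ?_⟩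
  have hv : h v = fun i ↦ MvPolynomial.eval v (q i) := funext (hq · v)
  simp only [hv]
  exact (MvPolynomial.eval₂Hom_bind₁ (RingHom.id R) v q p).symm

end IsPolyFun

end PolynomialFunctions

section DiophantinePredicates
variable {R α β κ : Type*} [CommRing R]

/-- A predicate in a family of variables `v : α → R` is diophantine if it asserts the solvability
of a finite polynomial system with parameters `v`. The sets that are diophantine in the sense of
`IsDiophantineOver` are those with `α = Unit`, see `isDiophantineOver_iff`. -/
def IsDiophantine (P : (α → R) → Prop) : Prop :=
  ∃ (n k : ℕ) (f : Fin k → MvPolynomial (α ⊕ Fin n) R),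
    ∀ v, P v ↔ ∃ w : Fin n → R, ∀ i, MvPolynomial.eval (Sum.elim v w) (f i) = 0

namespace IsDiophantine

theorem of_finite [Finite β] [Finite κ] {P : (α → R) → Prop} (f : κ → ((α ⊕ β) → R) → R)
    (hf : ∀ k, IsPolyFun (f k)) (hP : ∀ v, P v ↔ ∃ w, ∀ k, f k (Sum.elim v w) = 0) :
    IsDiophantine P := by
  obtain ⟨n, ⟨eβ⟩⟩ := Finite.exists_equiv_fin β
  obtain ⟨k, ⟨eκ⟩⟩ := Finite.exists_equiv_fin κ
  choose p hp using hf
  refine ⟨n, k, fun i ↦ MvPolynomial.rename (Sum.map id eβ) (p (eκ.symm i)), fun v ↦ ?_⟩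
  simp only [hP, hp, MvPolynomial.eval_rename, Sum.elim_comp_map, Function.comp_id]
  rw [(eβ.symm.arrowCongr (Equiv.refl R)).exists_congr_left]
  simp [eκ.symm.forall_congr_left, Function.comp_def, Equiv.arrowCongr]

protected theorem eq {f g : (α → R) → R} (hf : IsPolyFun f) (hg : IsPolyFun g) :
    IsDiophantine (fun v ↦ f v = g v) := by
  obtain ⟨p, hp⟩ := hf
  obtain ⟨q, hq⟩ := hg
  refine of_finite (β := Empty) (κ := Unit) (fun _ v ↦ MvPolynomial.eval (v ∘ .inl) (p - q))
    (fun _ ↦ by fun_prop) fun v ↦ ?_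
  simp [hp, hq, sub_eq_zero]

theorem congr {P Q : (α → R) → Prop} (hP : IsDiophantine P) (h : ∀ v, Q v ↔ P v) :
    IsDiophantine Q := by
  rwa [funext fun v ↦ propext (h v)]

theorem forall_finite [Finite κ] {P : κ → (α → R) → Prop} (hP : ∀ k, IsDiophantine (P k)) :
    IsDiophantine (fun v ↦ ∀ k, P k v) := by
  choose n m f hf using hP
  refine of_finite (β := Σ k, Fin (n k)) (κ := Σ k, Fin (m k))
    (fun i v ↦ MvPolynomial.eval (v ∘ Sum.map id (Sigma.mk i.1)) (f i.1 i.2))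
    (fun i ↦ by fun_prop) fun v ↦ ?_
  simp only [hf, Sum.elim_comp_map, Function.comp_id, Sigma.forall]
  constructor
  · intro h
    choose w hw using h
    exact ⟨fun i ↦ w i.1 i.2, hw⟩
  · rintro ⟨w, hw⟩ k
    exact ⟨fun i ↦ w ⟨k, i⟩, hw k⟩

protected theorem and {P Q : (α → R) → Prop} (hP : IsDiophantine P) (hQ : IsDiophantine Q) :
    IsDiophantine (fun v ↦ P v ∧ Q v) := by
  have h (b : Bool) : IsDiophantine (fun v ↦ cond b (P v) (Q v)) := by cases b <;> assumption
  exact (forall_finite h).congr fun v ↦ by simp [and_comm]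

theorem comp {P : (β → R) → Prop} (hP : IsDiophantine P) {h : (α → R) → β → R}
    (hh : ∀ i, IsPolyFun (fun v ↦ h v i)) : IsDiophantine (fun v ↦ P (h v)) := by
  obtain ⟨n, k, f, hf⟩ := hP
  refine of_finite
    (fun i v ↦ MvPolynomial.eval (Sum.elim (h fun j ↦ v (.inl j)) fun j ↦ v (.inr j)) (f i))
    (fun i ↦ .eval _ ?_) fun v ↦ by simp [hf]
  rintro (j | j)
  · obtain ⟨p, hp⟩ := hh j
    simp only [Sum.elim_inl, hp]
    fun_prop
  · simp only [Sum.elim_inr]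
    fun_prop

theorem exists_pi [Finite β] {Q : (α → R) → (β → R) → Prop}
    (h : IsDiophantine (fun v : α ⊕ β → R ↦ Q (fun i ↦ v (.inl i)) (fun i ↦ v (.inr i)))) :
    IsDiophantine (fun v ↦ ∃ x, Q v x) := by
  obtain ⟨n, k, f, hf⟩ := h
  refine of_finite (β := β ⊕ Fin n)
    (fun i v ↦ MvPolynomial.eval (v ∘ Equiv.sumAssoc α β (Fin n)) (f i))
    (fun i ↦ by fun_prop) fun v ↦ ?_
  have hsplit (x : β → R) (w : Fin n → R) : Sum.elim v (Sum.elim x w) ∘ Equiv.sumAssoc α β (Fin n) =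
      Sum.elim (Sum.elim v x) w := by
    ext ((i | i) | i) <;> rfl
  rw [(Equiv.sumArrowEquivProdArrow β (Fin n) R).exists_congr_left, Prod.exists]
  refine exists_congr fun x ↦ ?_
  simpa [hsplit, Equiv.sumArrowEquivProdArrow] using hf (Sum.elim v x)

theorem exists_var {Q : (α → R) → R → Prop}
    (h : IsDiophantine (fun v : Option α → R ↦ Q (fun i ↦ v (some i)) (v none))) :
    IsDiophantine (fun v ↦ ∃ x, Q v x) := by
  have h' : IsDiophantine (fun v : α ⊕ Unit → R ↦ Q (fun i ↦ v (.inl i)) (v (.inr ()))) :=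
    h.comp (h := fun v i ↦ v (i.elim (Sum.inr ()) Sum.inl)) (by fun_prop)
  exact (exists_pi (Q := fun v x ↦ Q v (x ())) h').congr fun v ↦
    (Equiv.funUnique Unit R).symm.exists_congr_left

theorem dvd {f g : (α → R) → R} (hf : IsPolyFun f) (hg : IsPolyFun g) :
    IsDiophantine (fun v ↦ f v ∣ g v) := by
  obtain ⟨p, hp⟩ := hf
  obtain ⟨q, hq⟩ := hg
  simp only [hp, hq, dvd_def]
  exact exists_var (.eq (by fun_prop) (by fun_prop))

end IsDiophantine

theorem isDiophantineOver_iff {E : Set R} :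
    IsDiophantineOver R E ↔ IsDiophantine (fun v : Unit → R ↦ v () ∈ E) := by
  have hcons {n : ℕ} (v : Unit → R) (w : Fin n → R) :
      (Fin.cons (v ()) w : Fin (n + 1) → R) ∘ Sum.elim 0 Fin.succ = Sum.elim v w := by
    ext (i | i) <;> rfl
  constructor
  · rintro ⟨n, k, f, hf⟩
    refine .of_finite (fun i v ↦ MvPolynomial.eval (Fin.cons (v (.inl ())) (v ∘ .inr)) (f i))
      (fun i ↦ .eval _ (Fin.cases ?_ fun j ↦ ?_)) fun v ↦ by simp [hf]
    · simp only [Fin.cons_zero]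
      fun_prop
    · simp only [Fin.cons_succ, Function.comp_apply]
      fun_prop
  · rintro ⟨n, k, f, hf⟩
    refine ⟨n, k, fun i ↦ MvPolynomial.rename (Sum.elim 0 Fin.succ) (f i), fun τ ↦ ?_⟩
    simp only [MvPolynomial.eval_rename]
    exact (hf fun _ ↦ τ).trans (by simp only [← hcons])

theorem IsDiophantineOver.isDiophantine_mem {E : Set R} (hE : IsDiophantineOver R E)
    {g : (α → R) → R} (hg : IsPolyFun g) : IsDiophantine (fun v ↦ g v ∈ E) :=
  (isDiophantineOver_iff.1 hE).comp (h := fun v _ ↦ g v) fun _ ↦ hg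

theorem IsDiophantineOver.iInter [Finite κ] {E : κ → Set R} (hE : ∀ k, IsDiophantineOver R (E k)) :
    IsDiophantineOver R (⋂ k, E k) := by
  simp only [isDiophantineOver_iff, Set.mem_iInter] at hE ⊢
  exact .forall_finite hE

theorem isDiophantineOver_univ : IsDiophantineOver R Set.univ :=
  ⟨0, 0, fun _ ↦ 0, by simp⟩

end DiophantinePredicates

section Transfer
variable {R S α : Type*} [CommRing R] [CommRing S]

namespace IsDiophantineOver

theorem image {E : Set R} (hE : IsDiophantineOver R E) {φ : R →+* S} (hφ : Function.Injective φ)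
    (hrange : IsDiophantineOver S (Set.range φ)) :
    IsDiophantineOver S (φ '' E) := by
  obtain ⟨n, k, f, hf⟩ := isDiophantineOver_iff.1 hE
  have hsystem : IsDiophantine (fun v : Unit → S ↦ ∃ w : Fin n → S, v () ∈ Set.range φ ∧
      (∀ j, w j ∈ Set.range φ) ∧
      ∀ i, MvPolynomial.eval (Sum.elim v w) (MvPolynomial.map φ (f i)) = 0) := by
    refine .exists_pi (.and (hrange.isDiophantine_mem (by fun_prop)) (.and
      (.forall_finite fun j ↦ hrange.isDiophantine_mem (by fun_prop))
      (.forall_finite fun i ↦ .eq (.eval _ ?_) (.const 0))))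
    rintro (j | j) <;> exact .apply _
  have heval (v : Unit → R) (w : Fin n → R) (i : Fin k) :
      MvPolynomial.eval (Sum.elim (φ ∘ v) (φ ∘ w)) (MvPolynomial.map φ (f i)) =
        φ (MvPolynomial.eval (Sum.elim v w) (f i)) := by
    rw [MvPolynomial.eval₂_comp, MvPolynomial.eval_map, Sum.comp_elim]
  refine isDiophantineOver_iff.2 (hsystem.congr fun v ↦ ⟨?_, ?_⟩)
  · rintro ⟨t, ht, htv⟩
    obtain ⟨w, hw⟩ := (hf fun _ ↦ t).1 ht
    obtain rfl : v = φ ∘ fun _ ↦ t := funext fun _ ↦ htv.symm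
    exact ⟨φ ∘ w, ⟨t, rfl⟩, fun j ↦ ⟨w j, rfl⟩, fun i ↦ by rw [heval, hw, map_zero]⟩
  · rintro ⟨w, ⟨t, ht⟩, hw, hroot⟩
    choose w' hw' using hw
    obtain rfl : v = φ ∘ fun _ ↦ t := funext fun _ ↦ ht.symm
    obtain rfl : φ ∘ w' = w := funext hw'
    refine ⟨t, (hf fun _ ↦ t).2 ⟨w', fun i ↦ hφ ?_⟩, rfl⟩
    rw [← heval, hroot, map_zero]

end IsDiophantineOver

variable [Algebra R S]

theorem IsPolyFun.linearMap_comp {g : (α → S) → S} (hg : IsPolyFun g) (ψ : S →ₗ[R] R) :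
    IsPolyFun (fun v : α → R ↦ ψ (g (algebraMap R S ∘ v))) := by
  obtain ⟨p, hp⟩ := hg
  simp only [hp]
  clear hp
  induction p using MvPolynomial.induction_on' with
  | monomial d s =>
    refine ⟨MvPolynomial.monomial d (ψ s), fun v ↦ ?_⟩
    have hprod : (d.prod fun i e ↦ (algebraMap R S ∘ v) i ^ e) =
        algebraMap R S (d.prod fun i e ↦ v i ^ e) := by simp [Finsupp.prod]
    simp only [MvPolynomial.eval_monomial, hprod, mul_comm s, ← Algebra.smul_def, map_smul,
      smul_eq_mul, mul_comm (ψ s)]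
  | add p q hp hq =>
    simp only [map_add]
    exact hp.add hq

namespace IsDiophantineOver

/-- Unknowns in `S` become blocks of unknowns in `R` through a surjection `R ^ m → S`, and an
equation in `S` becomes a block of equations in `R` through an embedding `S → R ^ m`. -/
theorem preimage_algebraMap [Module.Finite R S] [Module.Projective R S] {E : Set S}
    (hE : IsDiophantineOver S E) : IsDiophantineOver R (algebraMap R S ⁻¹' E) := by
  obtain ⟨n, k, f, hf⟩ := isDiophantineOver_iff.1 hE
  obtain ⟨m, π, ι, hπ, hι, -⟩ := Module.Finite.exists_comp_eq_id_of_projective R S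
  let x (v : Unit ⊕ Fin n × Fin m → S) : Unit ⊕ Fin n → S :=
    Sum.elim (v ∘ .inl) fun j ↦ ∑ i, v (.inr (j, i)) * π (fun l ↦ if i = l then 1 else 0)
  have hx (v : Unit → R) (c : Fin n × Fin m → R) : x (algebraMap R S ∘ Sum.elim v c) =
      Sum.elim (algebraMap R S ∘ v) fun j ↦ π fun i ↦ c (j, i) := by
    ext (j | j)
    · rfl
    · simp [x, π.pi_apply_eq_sum_univ fun i ↦ c (j, i), Algebra.smul_def]
  have hpoly (l : Fin k × Fin m) : IsPolyFun (fun v : Unit ⊕ Fin n × Fin m → R ↦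
      ι (MvPolynomial.eval (x (algebraMap R S ∘ v)) (f l.1)) l.2) := by
    refine .linearMap_comp (g := fun v ↦ MvPolynomial.eval (x v) (f l.1)) (.eval _ ?_)
      (LinearMap.proj l.2 ∘ₗ ι)
    rintro (j | j) <;> simp only [x, Sum.elim_inl, Sum.elim_inr, Function.comp_apply] <;> fun_prop
  refine isDiophantineOver_iff.2 (.of_finite _ hpoly fun v ↦ ?_)
  refine (hf (algebraMap R S ∘ v)).trans ?_
  simp only [hx, Prod.forall]
  constructor
  · rintro ⟨a, ha⟩
    choose c hc using fun j ↦ hπ (a j)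
    exact ⟨fun l ↦ c l.1 l.2, fun i l ↦ by simp [hc, ha]⟩
  · rintro ⟨c, hc⟩
    exact ⟨_, fun i ↦ hι (funext fun l ↦ (hc i l).trans (by simp))⟩

end IsDiophantineOver

end Transfer

section Pell
open Polynomial
variable {R S : Type*} [CommRing R] [CommRing S]

/-- The rational part of `(a + √(a ^ 2 - 1)) ^ k`, so that `(pellX a k, pellY a k)` runs through
solutions of the Pell equation `x ^ 2 - (a ^ 2 - 1) * y ^ 2 = 1`. -/
noncomputable def pellX (a : R) (k : ℤ) : R := (Chebyshev.T R k).eval a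

/-- The coefficient of `√(a ^ 2 - 1)` in `(a + √(a ^ 2 - 1)) ^ k`. The index of the Chebyshev
polynomial of the second kind is shifted by one. -/
noncomputable def pellY (a : R) (k : ℤ) : R := (Chebyshev.U R (k - 1)).eval a

variable (a : R) (k l m : ℤ)

@[simp] theorem pellX_zero : pellX a 0 = 1 := by simp [pellX]
@[simp] theorem pellX_one : pellX a 1 = a := by simp [pellX]
@[simp] theorem pellY_zero : pellY a 0 = 0 := by simp [pellY]
@[simp] theorem pellX_neg : pellX a (-k) = pellX a k := by simp [pellX]
@[simp] theorem pellY_neg : pellY a (-k) = -pellY a k := by simp [pellY, Chebyshev.U_neg_sub_one]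
theorem pellY_one_left : pellY (1 : R) k = k := by simp [pellY]

theorem pellX_add_one : pellX a (k + 1) = a * pellX a k + (a ^ 2 - 1) * pellY a k := by
  have h := congrArg (eval a) (Chebyshev.T_eq_X_mul_T_sub_pol_U R (k - 1))
  rw [show k - 1 + 2 = k + 1 by ring, sub_add_cancel] at h
  simp only [eval_sub, eval_mul, eval_X, eval_one, eval_pow] at h
  simp only [pellX, pellY, h]
  ring

theorem pellY_add_one : pellY a (k + 1) = pellX a k + a * pellY a k := by
  have h := congrArg (eval a) (Chebyshev.U_eq_X_mul_U_add_T R (k - 1))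
  simp only [sub_add_cancel, eval_add, eval_mul, eval_X] at h
  simp only [pellX, pellY, add_sub_cancel_right, h]
  ring

theorem pellX_sub_one : pellX a (k - 1) = a * pellX a k - (a ^ 2 - 1) * pellY a k := by
  have h := pellX_add_one a (-k)
  rw [neg_add_eq_sub, ← neg_sub, pellX_neg, pellX_neg, pellY_neg] at h
  rw [h]
  ring

theorem pellY_sub_one : pellY a (k - 1) = a * pellY a k - pellX a k := by
  have h := pellY_add_one a (-k)
  rw [neg_add_eq_sub, ← neg_sub, pellX_neg, pellY_neg, pellY_neg] at h
  linear_combination -h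

private theorem pellX_add_and_pellY_add :
    pellX a (k + l) = pellX a k * pellX a l + (a ^ 2 - 1) * (pellY a k * pellY a l) ∧
      pellY a (k + l) = pellX a k * pellY a l + pellY a k * pellX a l := by
  induction l using Int.induction_on with
  | zero => simp
  | succ l ih =>
    rw [← add_assoc, pellX_add_one a (k + l), pellY_add_one a (k + l), ih.1, ih.2, pellX_add_one,
      pellY_add_one]
    constructor <;> ring
  | pred l ih =>
    rw [← add_sub_assoc, pellX_sub_one a (k + -l), pellY_sub_one a (k + -l), ih.1, ih.2,
      pellX_sub_one, pellY_sub_one]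
    constructor <;> ring

theorem pellX_add :
    pellX a (k + l) = pellX a k * pellX a l + (a ^ 2 - 1) * (pellY a k * pellY a l) :=
  (pellX_add_and_pellY_add a k l).1

theorem pellY_add : pellY a (k + l) = pellX a k * pellY a l + pellY a k * pellX a l :=
  (pellX_add_and_pellY_add a k l).2

theorem pellX_sub :
    pellX a (k - l) = pellX a k * pellX a l - (a ^ 2 - 1) * (pellY a k * pellY a l) := by
  rw [sub_eq_add_neg, pellX_add, pellX_neg, pellY_neg]
  ring

theorem pellY_sub : pellY a (k - l) = pellY a k * pellX a l - pellX a k * pellY a l := by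
  rw [sub_eq_add_neg, pellY_add, pellX_neg, pellY_neg]
  ring

theorem pell_identity : pellX a k ^ 2 - (a ^ 2 - 1) * pellY a k ^ 2 = 1 := by
  have h := pellX_sub a k k
  rw [sub_self, pellX_zero] at h
  linear_combination -h

theorem isCoprime_pellX_pellY : IsCoprime (pellX a k) (pellY a k) :=
  ⟨pellX a k, -(a ^ 2 - 1) * pellY a k, by linear_combination pell_identity a k⟩

theorem pellX_mul : pellX a (k * l) = pellX (pellX a k) l := by
  simp only [pellX, mul_comm k l, Chebyshev.T_mul, eval_comp]

theorem pellY_mul : pellY a (k * l) = pellY a k * pellY (pellX a k) l := by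
  induction l using Int.induction_on with
  | zero => simp
  | succ l ih => rw [mul_add, mul_one, pellY_add, ih, pellX_mul, pellY_add_one]; ring
  | pred l ih => rw [mul_sub, mul_one, pellY_sub, ih, pellX_mul, pellY_sub_one]; ring

theorem pellY_dvd_pellY_mul : pellY a k ∣ pellY a (k * l) := ⟨_, pellY_mul a k l⟩

theorem pellX_add_two_mul : pellX a (k + 2 * m) + pellX a k = 2 * pellX a (k + m) * pellX a m := by
  have hadd := pellX_add a (k + m) m
  have hsub := pellX_sub a (k + m) m
  rw [add_assoc, ← two_mul] at hadd
  rw [add_sub_cancel_right] at hsub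
  rw [hadd, hsub]
  ring

theorem pellX_natAbs : pellX a k.natAbs = pellX a k := by
  obtain h | h := Int.natAbs_eq k
  · rw [← h]
  · conv_rhs => rw [h, pellX_neg]

theorem pellY_natAbs_eq_or : pellY a k.natAbs = pellY a k ∨ pellY a k.natAbs = -pellY a k := by
  rw [← pellY_neg]
  exact k.natAbs_eq.imp (fun h ↦ by rw [← h]) fun h ↦ by conv_rhs => rw [h, neg_neg]

theorem pellX_neg_left_eq_or : pellX (-a) k = pellX a k ∨ pellX (-a) k = -pellX a k := by
  simp only [pellX, Chebyshev.T_eval_neg]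
  obtain h | h := Int.even_or_odd k <;> simp [h]

theorem pellY_neg_left_eq_or : pellY (-a) k = pellY a k ∨ pellY (-a) k = -pellY a k := by
  have hsucc (n : ℕ) : pellY (-a) (n + 1) = pellY a (n + 1) ∨
      pellY (-a) (n + 1) = -pellY a (n + 1) := by
    simp only [pellY, add_sub_cancel_right, Chebyshev.U_eval_neg]
    obtain h | h := neg_one_pow_eq_or R n <;> simp [h]
  obtain ⟨_ | n, rfl | rfl⟩ := k.eq_nat_or_neg
  · simp
  · simp
  · exact_mod_cast hsucc n
  · simp only [pellY_neg, neg_inj]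
    exact_mod_cast hsucc n

variable {a} in
theorem dvd_pellX_sub_pellX {b c : R} (h : c ∣ a - b) : c ∣ pellX a k - pellX b k :=
  h.trans (sub_dvd_eval_sub _ _ _)

variable {a} in
theorem dvd_pellY_sub_pellY {b c : R} (h : c ∣ a - b) : c ∣ pellY a k - pellY b k :=
  h.trans (sub_dvd_eval_sub _ _ _)

theorem map_pellX (f : R →+* S) : f (pellX a k) = pellX (f a) k := by
  rw [pellX, pellX, ← Chebyshev.map_T f, eval_map, eval₂_hom]

theorem map_pellY (f : R →+* S) : f (pellY a k) = pellY (f a) k := by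
  rw [pellY, pellY, ← Chebyshev.map_U f, eval_map, eval₂_hom]

theorem sq_sub_one_dvd_pellY_sub : a ^ 2 - 1 ∣ pellY a k - k * pellX a (k - 1) := by
  induction k using Int.induction_on with
  | zero => simp
  | succ k ih =>
    obtain ⟨c, hc⟩ := ih
    rw [add_sub_cancel_right, pellY_add_one]
    rw [pellX_sub_one] at hc
    refine ⟨a * c + k * pellX a k - a * k * pellY a k, ?_⟩
    push_cast at hc ⊢
    linear_combination a * hc
  | pred k ih =>
    obtain ⟨c, hc⟩ := ih
    rw [pellX_sub_one a (-k - 1), pellY_sub_one]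
    rw [pellX_sub_one] at hc ⊢
    refine ⟨a * c + pellX a (-k) - a * pellY a (-k) -
      (k + 1) * (a * pellY a (-k) - pellX a (-k)), ?_⟩
    push_cast at hc ⊢
    linear_combination a * hc

theorem pellY_dvd_intCast_of_dvd_pellY_pellX (h : pellY a k ∣ pellY (pellX a k) l) :
    pellY a k ∣ (l : R) := by
  have hsq : pellY a k ∣ pellX a k ^ 2 - 1 :=
    ⟨(a ^ 2 - 1) * pellY a k, by linear_combination pell_identity a k⟩
  have hmul : pellY a k ∣ l * pellX (pellX a k) (l - 1) :=
    (dvd_sub_right h).1 (hsq.trans (sq_sub_one_dvd_pellY_sub _ l))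
  have hcop : IsCoprime (pellY a k) (pellX (pellX a k) (l - 1)) := by
    rw [← pellX_mul]
    exact ((isCoprime_pellX_pellY a _).of_isCoprime_of_dvd_right (pellY_dvd_pellY_mul a k _)).symm
  exact hcop.dvd_of_dvd_mul_right hmul

theorem dvd_pellY_gcd {d : R} (hk : d ∣ pellY a k) (hl : d ∣ pellY a l) :
    d ∣ pellY a (Int.gcd k l) := by
  rw [Int.gcd_eq_gcd_ab, pellY_add]
  exact ((hl.trans (pellY_dvd_pellY_mul _ _ _)).mul_left _).add
    ((hk.trans (pellY_dvd_pellY_mul _ _ _)).mul_right _)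

theorem pellY_dvd_intCast_of_sq_dvd [IsDomain R] (hl : pellY a l ≠ 0)
    (h : pellY a k ^ 2 ∣ pellY a l) : pellY a k ∣ (l : R) := by
  obtain ⟨k', hk'⟩ : (Int.gcd k l : ℤ) ∣ k := Int.gcd_dvd_left ..
  obtain ⟨l', hl'⟩ : (Int.gcd k l : ℤ) ∣ l := Int.gcd_dvd_right ..
  have hkg : pellY a k ∣ pellY a (Int.gcd k l) :=
    dvd_pellY_gcd a k l dvd_rfl ((dvd_pow_self _ two_ne_zero).trans h)
  have hgk : pellY a (Int.gcd k l) ∣ pellY a k := by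
    conv_rhs => rw [hk']
    exact pellY_dvd_pellY_mul a _ k'
  generalize (Int.gcd k l : ℤ) = g at *
  have hg : pellY a g ^ 2 ∣ pellY a g * pellY (pellX a g) l' := by
    rw [← pellY_mul, ← hl']
    exact (pow_dvd_pow_of_dvd hgk 2).trans h
  have hg0 : pellY a g ≠ 0 := by
    rintro hg0
    simp [hl', pellY_mul, hg0] at hl
  rw [sq, mul_dvd_mul_iff_left hg0] at hg
  rw [hl', Int.cast_mul]
  exact (hkg.trans (pellY_dvd_intCast_of_dvd_pellY_pellX a g l' hg)).mul_left _

end Pell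

section RealPell
variable {A : ℝ} {k l : ℤ}

open Real in
theorem pellX_cosh (θ : ℝ) (k : ℤ) : pellX (cosh θ) k = cosh (k * θ) :=
  Polynomial.Chebyshev.T_real_cosh θ k

open Real in
theorem pellY_cosh_mul_sinh (θ : ℝ) (k : ℤ) : pellY (cosh θ) k * sinh θ = sinh (k * θ) := by
  have h := Polynomial.Chebyshev.U_real_cosh θ (k - 1)
  push_cast at h
  rwa [sub_add_cancel] at h

theorem one_le_pellX (hA : 1 ≤ A) (k : ℤ) : 1 ≤ pellX A k := by
  rw [← Real.cosh_arcosh hA, pellX_cosh]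
  exact Real.one_le_cosh _

theorem pellX_le_pellX_iff (hA : 1 < A) : pellX A k ≤ pellX A l ↔ |k| ≤ |l| := by
  have hθ := Real.arcosh_pos hA
  rw [← Real.cosh_arcosh hA.le, pellX_cosh, pellX_cosh, Real.cosh_le_cosh, abs_mul, abs_mul,
    mul_le_mul_iff_left₀ (abs_pos.2 hθ.ne'), ← Int.cast_abs, ← Int.cast_abs, Int.cast_le]

theorem pellX_eq_pellX_iff (hA : 1 < A) : pellX A k = pellX A l ↔ |k| = |l| := by
  simp only [le_antisymm_iff, pellX_le_pellX_iff hA]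

theorem pellY_ne_zero (hA : 1 < A) (hk : k ≠ 0) : pellY A k ≠ 0 := by
  intro h0
  have hX : pellX A k ≠ pellX A 0 := (pellX_eq_pellX_iff hA).not.2 (by simpa)
  have hsq : pellX A k ^ 2 = 1 := by simpa [h0] using pell_identity A k
  have hnonneg := zero_le_one.trans (one_le_pellX hA.le k)
  exact hX (by rw [pellX_zero, (pow_eq_one_iff_of_nonneg hnonneg two_ne_zero).1 hsq])

theorem natCast_le_pellY (hA : 1 ≤ A) (k : ℕ) : k ≤ pellY A k := by
  induction k with
  | zero => simp
  | succ k ih =>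
    push_cast
    rw [pellY_add_one]
    nlinarith [one_le_pellX hA k, k.cast_nonneg (α := ℝ)]

theorem mul_pellX_le_pellX_add_one (hA : 1 ≤ A) (k : ℕ) : A * pellX A k ≤ pellX A (k + 1) := by
  have hY : 0 ≤ pellY A k := k.cast_nonneg.trans (natCast_le_pellY hA k)
  rw [pellX_add_one]
  nlinarith [mul_nonneg (show 0 ≤ A ^ 2 - 1 by nlinarith) hY]

theorem le_pellX (hA : 1 < A) (hk : k ≠ 0) : A ≤ pellX A k := by
  simpa using (pellX_le_pellX_iff (k := 1) (l := k) hA).2 (by simpa using Int.one_le_abs hk)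

theorem abs_lt_pellX (hA : 2 ≤ A) (k : ℤ) : |(k : ℝ)| < pellX A k := by
  have hnat (n : ℕ) : (n : ℝ) < pellX A n := by
    induction n with
    | zero => simp
    | succ n ih =>
      have hstep := mul_pellX_le_pellX_add_one (by linarith : 1 ≤ A) n
      push_cast
      nlinarith [one_le_pellX (by linarith : 1 ≤ A) n]
  rw [← pellX_natAbs, ← Int.cast_abs, Int.abs_eq_natAbs]
  exact hnat _

theorem abs_le_one_of_pell {b x y : ℝ} (h : x ^ 2 - (b ^ 2 - 1) * y ^ 2 = 1) (hb : |b| ≤ 1) :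
    |x| ≤ 1 := by
  rw [← sq_le_one_iff_abs_le_one] at *
  nlinarith [sq_nonneg y]

theorem sq_le_of_pell {b x y : ℝ} (h : x ^ 2 - (b ^ 2 - 1) * y ^ 2 = 1) (hb : |b| ≤ 1 / 4) :
    y ^ 2 ≤ 16 / 15 := by
  have hb2 := sq_le_sq' (neg_le_of_abs_le hb) (le_of_abs_le hb)
  nlinarith [sq_nonneg x, sq_nonneg y]

/- With `B = cosh θ` and `(X, Y) = (cosh φ, sinh φ / sinh θ)`, dividing the solution by the power
whose exponent `k` is nearest to `φ / θ` leaves the angle `φ - k * θ`, at most `θ / 2`. -/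
open Real in
theorem exists_pellY_shift_le {B X Y : ℝ} (hB : 1 < B) (hX : 0 < X)
    (h : X ^ 2 - (B ^ 2 - 1) * Y ^ 2 = 1) :
    ∃ k : ℤ, 2 * (B + 1) * (Y * pellX B k - X * pellY B k) ^ 2 ≤ 1 := by
  have hθ := arcosh_pos hB
  obtain ⟨θ, hθB⟩ : ∃ θ, arcosh B = θ := ⟨_, rfl⟩
  rw [hθB] at hθ
  obtain rfl : cosh θ = B := by rw [← hθB, cosh_arcosh hB.le]
  obtain ⟨φ, hφ⟩ : ∃ φ, sinh φ = Y * sinh θ := sinh_surjective _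
  have hXφ : cosh φ = X := by
    rw [← sq_eq_sq₀ (cosh_pos φ).le hX.le, cosh_sq, hφ, mul_pow, sinh_sq]
    linear_combination -h
  let k := round (φ / θ)
  have hk : |φ - k * θ| ≤ θ / 2 := by
    have := abs_sub_round (φ / θ)
    rw [div_sub' hθ.ne', abs_div, abs_of_pos hθ, div_le_iff₀ hθ, mul_comm θ] at this
    linarith
  have hdiff : sinh θ * (Y * pellX (cosh θ) k - X * pellY (cosh θ) k) = sinh (φ - k * θ) := by
    rw [sinh_sub, hXφ, hφ, pellX_cosh, ← pellY_cosh_mul_sinh]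
    ring
  have hsmall : 2 * sinh (φ - k * θ) ^ 2 ≤ cosh θ - 1 := by
    have hhalf : cosh (2 * (φ - k * θ)) ≤ cosh θ := by
      rw [cosh_le_cosh, abs_mul, abs_two, abs_of_pos hθ]
      linarith
    rw [cosh_two_mul, cosh_sq] at hhalf
    linarith
  refine ⟨k, le_of_mul_le_mul_left ?_ (sub_pos.2 hB)⟩
  calc (cosh θ - 1) * (2 * (cosh θ + 1) * (Y * pellX (cosh θ) k - X * pellY (cosh θ) k) ^ 2)
      = 2 * sinh (φ - k * θ) ^ 2 := by rw [← hdiff, mul_pow, sinh_sq]; ring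
    _ ≤ (cosh θ - 1) * 1 := by linarith

end RealPell

section DiagonalDominance
variable {ι : Type*} [Fintype ι]

theorem prod_le_mul_pow_card_sub_one {f : ι → ℝ} (hf : ∀ i, 0 ≤ f i) (i₀ : ι) {c : ℝ}
    (h : ∀ i ≠ i₀, f i ≤ c) : ∏ i, f i ≤ f i₀ * c ^ (Fintype.card ι - 1) := by
  classical
  rw [← Finset.mul_prod_erase _ _ (Finset.mem_univ i₀)]
  refine mul_le_mul_of_nonneg_left ?_ (hf i₀)
  simpa [Finset.card_erase_of_mem] using Finset.prod_le_prod (s := Finset.univ.erase i₀)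
    (fun i _ ↦ hf i) fun i hi ↦ h i (Finset.ne_of_mem_erase hi)

theorem mul_pow_card_sub_one_le_prod {f : ι → ℝ} (i₀ : ι) (hi₀ : 0 ≤ f i₀) {c : ℝ} (hc : 0 ≤ c)
    (h : ∀ i ≠ i₀, c ≤ f i) : f i₀ * c ^ (Fintype.card ι - 1) ≤ ∏ i, f i := by
  classical
  rw [← Finset.mul_prod_erase _ _ (Finset.mem_univ i₀)]
  refine mul_le_mul_of_nonneg_left ?_ hi₀
  simpa [Finset.card_erase_of_mem] using Finset.prod_le_prod (s := Finset.univ.erase i₀)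
    (fun _ _ ↦ hc) fun i hi ↦ h i (Finset.ne_of_mem_erase hi)

variable {G : ι → ι → ℝ} {t : ι → ℝ} {δ A m : ℝ}

theorem abs_sum_erase_mul_le [DecidableEq ι] {B : ℝ} (hδ : 0 ≤ δ)
    (hoff : ∀ i j, i ≠ j → |G i j| ≤ δ) (ht : ∀ j, |t j| ≤ B) (i : ι) :
    |∑ j ∈ Finset.univ.erase i, t j * G i j| ≤ Fintype.card ι * δ * B := by
  have hB : 0 ≤ B := (abs_nonneg _).trans (ht i)
  calc |∑ j ∈ Finset.univ.erase i, t j * G i j|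
      ≤ ∑ _ ∈ Finset.univ.erase i, B * δ := by
        refine (Finset.abs_sum_le_sum_abs _ _).trans (Finset.sum_le_sum fun j hj ↦ ?_)
        rw [abs_mul]
        exact mul_le_mul (ht j) (hoff i j (Finset.ne_of_mem_erase hj).symm) (abs_nonneg _) hB
    _ ≤ ∑ _ : ι, B * δ :=
        Finset.sum_le_sum_of_subset_of_nonneg (Finset.erase_subset _ _) fun _ _ _ ↦ by positivity
    _ = Fintype.card ι * δ * B := by
        simp only [Finset.sum_const, Finset.card_univ, nsmul_eq_mul]
        ring

theorem abs_le_two_mul_of_diagonal_dominant (hδ : 0 ≤ δ) (hδ' : Fintype.card ι * δ ≤ 1 / 2)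
    (hdiag : ∀ i, 1 ≤ G i i) (hoff : ∀ i j, i ≠ j → |G i j| ≤ δ)
    (hA : ∀ i, |∑ j, t j * G i j| ≤ A) (j : ι) : |t j| ≤ 2 * A := by
  classical
  have : Nonempty ι := ⟨j⟩
  obtain ⟨k, hk⟩ := Finite.exists_max fun j ↦ |t j|
  have hsplit : t k * G k k = ∑ j, t j * G k j - ∑ j ∈ Finset.univ.erase k, t j * G k j := by
    rw [← Finset.add_sum_erase _ _ (Finset.mem_univ k)]
    ring
  have hdiagonal : |t k| ≤ |t k * G k k| := by
    rw [abs_mul]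
    exact le_mul_of_one_le_right (abs_nonneg _) ((hdiag k).trans (le_abs_self _))
  have hle : |t k * G k k| ≤ A + Fintype.card ι * δ * |t k| := by
    rw [hsplit]
    exact (abs_sub _ _).trans (add_le_add (hA k) (abs_sum_erase_mul_le hδ hoff hk k))
  have : |t k| ≤ 2 * A := by nlinarith [abs_nonneg (t k)]
  exact (hk j).trans this

theorem pos_of_diagonal_dominant (hδ : 0 ≤ δ) (hδ' : Fintype.card ι * δ ≤ 1 / 2)
    (hdiag : ∀ i, 1 ≤ G i i) (hoff : ∀ i j, i ≠ j → |G i j| ≤ δ)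
    (hm : ∀ i, m ≤ ∑ j, t j * G i j) (hA : ∀ i, |∑ j, t j * G i j| ≤ A)
    (hmA : Fintype.card ι * δ * (2 * A) < m) (j : ι) : 0 < t j := by
  classical
  have hsplit := Finset.add_sum_erase _ (fun i ↦ t i * G j i) (Finset.mem_univ j)
  have herase := (abs_le.1 (abs_sum_erase_mul_le hδ hoff
    (abs_le_two_mul_of_diagonal_dominant hδ hδ' hdiag hoff hA) j)).2
  have hpos : 0 < t j * G j j := by linarith [hm j]
  exact pos_of_mul_pos_left hpos (zero_le_one.trans (hdiag j))

end DiagonalDominance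

section TotallyReal
open NumberField InfinitePlace

variable {F : Type*} [Field F] [IsTotallyReal F]

/-- The real embedding of the ring of integers of a totally real field that induces the infinite
place `w`. -/
noncomputable def realEmb (w : InfinitePlace F) : 𝓞 F →+* ℝ :=
  (embedding_of_isReal (IsTotallyReal.isReal w)).comp (algebraMap (𝓞 F) F)

theorem abs_realEmb (w : InfinitePlace F) (x : 𝓞 F) : |realEmb w x| = w x :=
  norm_embedding_of_isReal (IsTotallyReal.isReal w) (x : F)

theorem realEmb_injective (w : InfinitePlace F) : Function.Injective (realEmb w) :=
  (embedding_of_isReal (IsTotallyReal.isReal w)).injective.comp RingOfIntegers.coe_injective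

theorem realEmb_eq_zero_iff {w : InfinitePlace F} {x : 𝓞 F} : realEmb w x = 0 ↔ x = 0 :=
  map_eq_zero_iff _ (realEmb_injective w)

variable [NumberField F]

theorem card_infinitePlace_eq_finrank : Fintype.card (InfinitePlace F) = Module.finrank ℚ F := by
  have hrank := card_add_two_mul_card_eq_rank F
  have hcard := card_eq_nrRealPlaces_add_nrComplexPlaces F
  rw [IsTotallyReal.nrComplexPlaces_eq_zero] at hrank hcard
  omega

theorem one_le_prod_abs_realEmb {r : 𝓞 F} (hr : r ≠ 0) :
    1 ≤ ∏ w : InfinitePlace F, |realEmb w r| := by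
  have hprod := prod_eq_abs_norm (r : F)
  simp only [IsTotallyReal.mult_eq, pow_one] at hprod
  simp_rw [abs_realEmb]
  rw [hprod, ← Algebra.coe_norm_int, ← Int.cast_one, ← Int.cast_abs, Rat.cast_intCast,
    Int.cast_le]
  exact Int.one_le_abs (Algebra.norm_ne_zero_iff.2 hr)

theorem prod_abs_realEmb_le_of_dvd {r s : 𝓞 F} (hs : s ≠ 0) (h : r ∣ s) :
    ∏ w : InfinitePlace F, |realEmb w r| ≤ ∏ w : InfinitePlace F, |realEmb w s| := by
  obtain ⟨c, rfl⟩ := h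
  simp only [map_mul, abs_mul, Finset.prod_mul_distrib]
  exact le_mul_of_one_le_right (Finset.prod_nonneg fun _ _ ↦ abs_nonneg _)
    (one_le_prod_abs_realEmb (right_ne_zero_of_mul hs))

variable {w₀ : InfinitePlace F}

theorem one_le_abs_realEmb_mul_pow {r : 𝓞 F} (hr : r ≠ 0) {c : ℝ}
    (h : ∀ w ≠ w₀, |realEmb w r| ≤ c) :
    1 ≤ |realEmb w₀ r| * c ^ (Fintype.card (InfinitePlace F) - 1) :=
  (one_le_prod_abs_realEmb hr).trans
    (prod_le_mul_pow_card_sub_one (fun w ↦ abs_nonneg (realEmb w r)) w₀ h)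

theorem exists_abs_realEmb_lt (w₀ : InfinitePlace F) {δ : ℝ} (hδ : 0 < δ) :
    ∃ c : 𝓞 F, 1 ≤ |realEmb w₀ c| ∧ ∀ w ≠ w₀, |realEmb w c| < δ := by
  simp_rw [abs_realEmb]
  obtain ⟨u, hu⟩ := Units.dirichletUnitTheorem.exists_unit F w₀
  have hlt (w : InfinitePlace F) (hw : w ≠ w₀) : w ((u : 𝓞 F) : F) < 1 := by
    by_contra! hge
    exact (hu w hw).not_ge (Real.log_nonneg hge)
  have hge : 1 ≤ w₀ ((u : 𝓞 F) : F) := one_le_of_lt_one u.ne_zero fun w hw ↦ hlt w hw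
  have hsmall : ∀ᶠ q : ℕ in Filter.atTop, ∀ w ≠ w₀, w ((u : 𝓞 F) : F) ^ q < δ := by
    simp only [Filter.eventually_all]
    exact fun w hw ↦ (tendsto_pow_atTop_nhds_zero_of_lt_one
      (apply_nonneg w _) (hlt w hw)).eventually_lt_const hδ
  obtain ⟨q, hq⟩ := hsmall.exists
  exact ⟨u ^ q, by simpa using one_le_pow₀ hge, fun w hw ↦ by simpa using hq w hw⟩

end TotallyReal

section TotalPositivity
open NumberField InfinitePlace

theorem exists_smul_eq_sum_of_linearIndependent {M ι : Type*} [AddCommGroup M]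
    [Module.Finite ℤ M] [Fintype ι] {γ : ι → M} (hγ : LinearIndependent ℤ γ)
    (hcard : Fintype.card ι = Module.finrank ℤ M) (α : M) :
    ∃ (D : ℤ) (r : ι → ℤ), D ≠ 0 ∧ D • α = ∑ i, r i • γ i := by
  have hdep : ¬ LinearIndependent ℤ (fun o : Option ι ↦ o.elim α γ) := fun h ↦ by
    have := h.fintype_card_le_finrank
    rw [Fintype.card_option] at this
    omega
  rw [Fintype.linearIndependent_iff] at hγ
  obtain ⟨g, hg, o, ho⟩ := Fintype.not_linearIndependent_iff.1 hdep
  simp only [Fintype.sum_option, Option.elim] at hg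
  refine ⟨g none, fun i ↦ -g (some i), fun hnone ↦ ho ?_, ?_⟩
  · have hsome := hγ (fun i ↦ g (some i)) (by simpa [hnone] using hg)
    cases o with
    | none => exact hnone
    | some i => exact hsome i
  · simp only [neg_smul, Finset.sum_neg_distrib]
    exact eq_neg_of_add_eq_zero_left hg

variable {F : Type*} [Field F] [NumberField F]

/-- A diophantine condition on `α` that makes `α` nonnegative at all real places and that is
satisfied by every totally positive `α`. -/
def HasSumSqMultiple (α : 𝓞 F) : Prop :=
  ∃ (e : Fin 4 → 𝓞 F) (f : InfinitePlace F × Fin 4 → 𝓞 F),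
    (1 + ∑ i, e i ^ 2) * α = ∑ i, f i ^ 2

theorem isDiophantine_hasSumSqMultiple {α : Type*} {g : (α → 𝓞 F) → 𝓞 F} (hg : IsPolyFun g) :
    IsDiophantine (fun v ↦ HasSumSqMultiple (g v)) := by
  obtain ⟨p, hp⟩ := hg
  simp only [HasSumSqMultiple, hp]
  exact .exists_pi (.exists_pi (.eq (by fun_prop) (by fun_prop)))

variable [IsTotallyReal F]

theorem exists_realEmb_sq_diagonal_dominant {δ : ℝ} (hδ : 0 < δ) :
    ∃ γ : InfinitePlace F → 𝓞 F, (∀ w, 1 ≤ realEmb w (γ w ^ 2)) ∧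
      ∀ w v, w ≠ v → |realEmb w (γ v ^ 2)| ≤ δ := by
  choose γ hlarge hsmall using fun v : InfinitePlace F ↦
    exists_abs_realEmb_lt v (Real.sqrt_pos.2 hδ)
  refine ⟨γ, fun w ↦ ?_, fun w v hwv ↦ ?_⟩
  · rw [map_pow, one_le_sq_iff_one_le_abs]
    exact hlarge w
  · rw [map_pow, abs_pow]
    exact (pow_le_pow_left₀ (abs_nonneg _) (hsmall v w hwv).le 2).trans_eq (Real.sq_sqrt hδ.le)

theorem linearIndependent_of_realEmb_diagonal_dominant {δ : ℝ} (hδ : 0 ≤ δ)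
    (hδ' : Fintype.card (InfinitePlace F) * δ ≤ 1 / 2) {β : InfinitePlace F → 𝓞 F}
    (hdiag : ∀ w, 1 ≤ realEmb w (β w)) (hoff : ∀ w v, w ≠ v → |realEmb w (β v)| ≤ δ) :
    LinearIndependent ℤ β := by
  classical
  rw [Fintype.linearIndependent_iff]
  intro g hg v
  have hzero (w : InfinitePlace F) : ∑ v, (g v : ℝ) * realEmb w (β v) = 0 := by
    simpa using congrArg (realEmb w) hg
  have hle := abs_le_two_mul_of_diagonal_dominant hδ hδ' hdiag hoff (t := fun v ↦ (g v : ℝ))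
    (A := 0) (fun w ↦ by rw [hzero, abs_zero]) v
  simpa using hle

theorem exists_natCast_mul_eq_sum_sq {α : 𝓞 F} (hα : ∀ w, 0 < realEmb w α) :
    ∃ (D : ℕ) (r : InfinitePlace F → ℕ) (γ : InfinitePlace F → 𝓞 F),
      0 < D ∧ D * α = ∑ w, r w * γ w ^ 2 := by
  classical
  obtain ⟨wmax, hmax⟩ := Finite.exists_max fun w ↦ realEmb w α
  obtain ⟨wmin, hmin⟩ := Finite.exists_min fun w ↦ realEmb w α
  set A := realEmb wmax α
  set m := realEmb wmin α
  have hA : 0 < A := hα wmax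
  set n : ℝ := (Fintype.card (InfinitePlace F) : ℝ)
  obtain ⟨δ, hδ, hlt⟩ := exists_pos_mul_lt (lt_min one_half_pos (hα wmin)) (n * (1 + 2 * A))
  obtain ⟨hδ₁, hδ₂⟩ := lt_min_iff.1 hlt
  have hnδ : 0 ≤ n * δ := by positivity
  have hδ₁ : n * δ ≤ 1 / 2 := by nlinarith
  have hδ₂ : n * δ * (2 * A) < m := by nlinarith
  obtain ⟨γ, hdiag, hoff⟩ := exists_realEmb_sq_diagonal_dominant (F := F) hδ
  obtain ⟨D, r, hD, hr⟩ := exists_smul_eq_sum_of_linearIndependent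
    (linearIndependent_of_realEmb_diagonal_dominant hδ.le hδ₁ hdiag hoff)
    (card_infinitePlace_eq_finrank.trans (RingOfIntegers.rank F).symm) α
  simp only [zsmul_eq_mul] at hr
  have hD' : (D : ℝ) ≠ 0 := Int.cast_ne_zero.2 hD
  have hsum (w : InfinitePlace F) :
      ∑ v, (r v / D : ℝ) * realEmb w (γ v ^ 2) = realEmb w α := by
    have := congrArg (realEmb w) hr
    simp only [map_sum, map_mul, map_intCast] at this
    rw [← mul_right_inj' hD', this, Finset.mul_sum]
    exact Finset.sum_congr rfl fun v _ ↦ by field_simp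
  have hpos (v : InfinitePlace F) : 0 < D * r v := by
    have hquot : 0 < (r v / D : ℝ) :=
      pos_of_diagonal_dominant hδ.le hδ₁ hdiag hoff (fun w ↦ (hsum w).symm ▸ hmin w)
        (fun w ↦ by rw [hsum, abs_of_pos (hα w)]; exact hmax w) hδ₂ v
    have hprod : (0 : ℝ) < D * D * (r v / D) := mul_pos (mul_self_pos.2 hD') hquot
    rw [mul_assoc, mul_div_cancel₀ _ hD'] at hprod
    exact_mod_cast hprod
  refine ⟨(D * D).natAbs, fun w ↦ (D * r w).natAbs, γ, by positivity, ?_⟩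
  simp only [Nat.cast_natAbs, abs_mul_self, abs_of_pos (hpos _), Int.cast_mul, mul_assoc,
    ← Finset.mul_sum, hr]

theorem HasSumSqMultiple.realEmb_nonneg {α : 𝓞 F} (h : HasSumSqMultiple α)
    (w : InfinitePlace F) : 0 ≤ realEmb w α := by
  obtain ⟨e, f, h⟩ := h
  have hw := congrArg (realEmb w) h
  simp only [map_mul, map_add, map_sum, map_one, map_pow] at hw
  have hpos : 0 < 1 + ∑ i, realEmb w (e i) ^ 2 := by positivity
  exact nonneg_of_mul_nonneg_right (hw ▸ by positivity) hpos

theorem hasSumSqMultiple_of_pos {α : 𝓞 F} (hα : ∀ w, 0 < realEmb w α) : HasSumSqMultiple α := by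
  obtain ⟨D, r, γ, hD, h⟩ := exists_natCast_mul_eq_sum_sq hα
  obtain ⟨D, rfl⟩ := Nat.exists_eq_add_one.2 hD
  have hfour (n : ℕ) : ∃ e : Fin 4 → 𝓞 F, ∑ i, e i ^ 2 = n := by
    obtain ⟨a, b, c, d, rfl⟩ := Nat.sum_four_squares n
    exact ⟨![a, b, c, d], by simp [Fin.sum_univ_four]⟩
  choose e he using hfour
  refine ⟨e D, fun p ↦ e (r p.1) p.2 * γ p.1, ?_⟩
  simp only [he, Fintype.sum_prod_type, mul_pow, ← Finset.sum_mul, ← h]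
  push_cast
  ring

end TotalPositivity

section PellUnits
open NumberField InfinitePlace

theorem map_pell {R S : Type*} [CommRing R] [CommRing S] (f : R →+* S) {b x y : R}
    (h : x ^ 2 - (b ^ 2 - 1) * y ^ 2 = 1) : f x ^ 2 - (f b ^ 2 - 1) * f y ^ 2 = 1 := by
  simpa using congrArg f h

variable {F : Type*} [Field F] [NumberField F] [IsTotallyReal F] {w₀ : InfinitePlace F}
  {b x y : 𝓞 F}

theorem eq_zero_of_pell_of_sq_le (hb : 1 < realEmb w₀ b)
    (hbw : ∀ w ≠ w₀, |realEmb w b| ≤ 1 / 4) (h : x ^ 2 - (b ^ 2 - 1) * y ^ 2 = 1)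
    (hy : 2 * (realEmb w₀ b + 1) * realEmb w₀ y ^ 2 ≤ 1) : y = 0 := by
  by_contra hne
  set N := Fintype.card (InfinitePlace F) - 1
  have hbN : 1 ≤ realEmb w₀ b * (1 / 4) ^ N := by
    have hb₀ : b ≠ 0 := by
      rintro rfl
      rw [map_zero] at hb
      linarith
    simpa only [abs_of_pos (zero_lt_one.trans hb)] using one_le_abs_realEmb_mul_pow hb₀ hbw
  have hyN : 1 ≤ realEmb w₀ y ^ 2 * (16 / 15) ^ N := by
    have hyw (w : InfinitePlace F) (hw : w ≠ w₀) : |realEmb w (y ^ 2)| ≤ 16 / 15 := by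
      rw [map_pow, abs_sq]
      exact sq_le_of_pell (map_pell (realEmb w) h) (hbw w hw)
    simpa only [map_pow, abs_sq] using one_le_abs_realEmb_mul_pow (pow_ne_zero 2 hne) hyw
  have hpow : (16 / 15 : ℝ) ^ N * (1 / 4) ^ N ≤ 1 := by
    rw [← mul_pow]
    exact pow_le_one₀ (by norm_num) (by norm_num)
  have hbound : (16 / 15 : ℝ) ^ N ≤ realEmb w₀ b := by
    have : (0 : ℝ) < (1 / 4) ^ N := by positivity
    exact le_of_mul_le_mul_right (hpow.trans hbN) this
  nlinarith [mul_le_mul_of_nonneg_left hbound (sq_nonneg (realEmb w₀ y))]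

theorem exists_eq_or_eq_neg_pell_of_pos (hb : 1 < realEmb w₀ b)
    (hbw : ∀ w ≠ w₀, |realEmb w b| ≤ 1 / 4) (h : x ^ 2 - (b ^ 2 - 1) * y ^ 2 = 1)
    (hx : 0 < realEmb w₀ x) :
    ∃ k : ℤ, (x = pellX b k ∨ x = -pellX b k) ∧ (y = pellY b k ∨ y = -pellY b k) := by
  obtain ⟨k, hk⟩ := exists_pellY_shift_le hb hx (map_pell (realEmb w₀) h)
  have hk₁ := pell_identity b k
  set X := pellX b k with hX
  set Y := pellY b k with hY
  have hquot : (x * X - (b ^ 2 - 1) * (y * Y)) ^ 2 - (b ^ 2 - 1) * (y * X - x * Y) ^ 2 = 1 := by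
    linear_combination (x ^ 2 - (b ^ 2 - 1) * y ^ 2) * hk₁ + h
  have hy₀ : y * X - x * Y = 0 := by
    refine eq_zero_of_pell_of_sq_le hb hbw hquot ?_
    simpa only [map_sub, map_mul, hX, hY, map_pellX, map_pellY] using hk
  set ε := x * X - (b ^ 2 - 1) * (y * Y) with hε
  have hx' : x = ε * X := by linear_combination (-x) * hk₁ - X * hε + (b ^ 2 - 1) * Y * hy₀
  have hy' : y = ε * Y := by linear_combination (-y) * hk₁ - Y * hε + X * hy₀
  have hε₁ : ε = 1 ∨ ε = -1 := sq_eq_sq_iff_eq_or_eq_neg.1 (by linear_combination hquot +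
    (b ^ 2 - 1) * (y * X - x * Y) * hy₀)
  rw [hx', hy']
  exact ⟨k, by rcases hε₁ with h | h <;> simp [h, ← hX, ← hY]⟩

theorem exists_eq_or_eq_neg_pell (hb : 1 < |realEmb w₀ b|)
    (hbw : ∀ w ≠ w₀, |realEmb w b| ≤ 1 / 4) (h : x ^ 2 - (b ^ 2 - 1) * y ^ 2 = 1) :
    ∃ k : ℕ, (x = pellX b k ∨ x = -pellX b k) ∧ (y = pellY b k ∨ y = -pellY b k) := by
  wlog hbpos : 0 < realEmb w₀ b generalizing b
  · have hneg : realEmb w₀ (-b) = |realEmb w₀ b| := by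
      rw [map_neg, abs_of_nonpos (not_lt.1 hbpos)]
    obtain ⟨k, hk⟩ := this (b := -b) (by rwa [hneg, abs_abs]) (by simpa using hbw)
      (by rwa [neg_sq]) (by linarith)
    refine ⟨k, ?_⟩
    rcases pellX_neg_left_eq_or b k with h₁ | h₁ <;>
      rcases pellY_neg_left_eq_or b k with h₂ | h₂ <;>
      simpa [h₁, h₂, or_comm] using hk
  rw [abs_of_pos hbpos] at hb
  wlog hx : 0 < realEmb w₀ x generalizing x y
  · have hx₀ : realEmb w₀ x ≠ 0 := by
      intro h₀
      have := map_pell (realEmb w₀) h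
      rw [h₀] at this
      nlinarith [mul_nonneg (show 0 ≤ realEmb w₀ b ^ 2 - 1 by nlinarith) (sq_nonneg (realEmb w₀ y))]
    obtain ⟨k, hk⟩ := this (x := -x) (y := y) (by rwa [neg_sq])
      (by rw [map_neg]; exact neg_pos.2 ((not_lt.1 hx).lt_of_ne hx₀))
    exact ⟨k, by simpa [neg_eq_iff_eq_neg, or_comm] using hk⟩
  obtain ⟨k, hxk, hyk⟩ := exists_eq_or_eq_neg_pell_of_pos hb hbw h hx
  refine ⟨k.natAbs, by rwa [pellX_natAbs], ?_⟩
  rcases pellY_natAbs_eq_or b k with hk | hk <;> rw [hk]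
  · exact hyk
  · rwa [neg_neg, or_comm]

end PellUnits

section CongrUpToSign
variable {R : Type*} [CommRing R] {c d x y z : R}

/-- Congruence modulo `c` up to sign. It absorbs the signs left undetermined by the solutions of a
Pell equation. -/
def CongrUpToSign (c x y : R) : Prop := c ∣ x - y ∨ c ∣ x + y

namespace CongrUpToSign

theorem of_dvd_sub (h : c ∣ x - y) : CongrUpToSign c x y := Or.inl h

theorem of_eq_or_eq_neg (h : x = y ∨ x = -y) : CongrUpToSign c x y := by
  rcases h with rfl | rfl <;> simp [CongrUpToSign]

theorem symm (h : CongrUpToSign c x y) : CongrUpToSign c y x := by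
  rwa [CongrUpToSign, dvd_sub_comm, add_comm]

theorem trans (hxy : CongrUpToSign c x y) (hyz : CongrUpToSign c y z) : CongrUpToSign c x z := by
  rcases hxy with h₁ | h₁ <;> rcases hyz with h₂ | h₂
  · exact .inl (by convert h₁.add h₂ using 1; ring)
  · exact .inr (by convert h₁.add h₂ using 1; ring)
  · exact .inr (by convert h₁.sub h₂ using 1; ring)
  · exact .inl (by convert h₁.sub h₂ using 1; ring)

theorem of_dvd (hdc : d ∣ c) (h : CongrUpToSign c x y) : CongrUpToSign d x y :=
  h.imp hdc.trans hdc.trans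

theorem intCast {m k l : ℤ} (h : CongrUpToSign m k l) : CongrUpToSign (m : R) k l := by
  rcases h with h | h
  · exact .inl (mod_cast (Int.castRingHom R).map_dvd h)
  · exact .inr (mod_cast (Int.castRingHom R).map_dvd h)

end CongrUpToSign

theorem congrUpToSign_pellX_add_two_mul (a : R) (k m e : ℤ) :
    CongrUpToSign (pellX a m) (pellX a (k + 2 * m * e)) (pellX a k) := by
  have hstep (k : ℤ) : CongrUpToSign (pellX a m) (pellX a (k + 2 * m)) (pellX a k) :=
    .inr (pellX_add_two_mul a k m ▸ dvd_mul_left _ _)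
  induction e using Int.induction_on with
  | zero => exact .of_eq_or_eq_neg (by simp)
  | succ e ih =>
    rw [mul_add_one, ← add_assoc]
    exact (hstep _).trans ih
  | pred e ih =>
    refine CongrUpToSign.trans (.symm ?_) ih
    convert hstep (k + 2 * m * (-e - 1)) using 2
    ring

end CongrUpToSign

section PellBase
open NumberField InfinitePlace

variable {F : Type*} [Field F] [NumberField F] [IsTotallyReal F]

/-- A base `a` for the Pell equation `x ^ 2 - (a ^ 2 - 1) * y ^ 2 = 1` over a totally real field:
it is large at the place `w₀` and small at every other real place, so that the equation has
unbounded solutions only at `w₀`. -/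
structure IsPellBase (w₀ : InfinitePlace F) (a : 𝓞 F) : Prop where
  abs_le : ∀ w ≠ w₀, |realEmb w a| ≤ 1 / 8
  lt_realEmb : (4 : ℝ) ^ Fintype.card (InfinitePlace F) < realEmb w₀ a

theorem exists_isPellBase (w₀ : InfinitePlace F) (hcard : 2 ≤ Fintype.card (InfinitePlace F)) :
    ∃ a, IsPellBase w₀ a := by
  set n := Fintype.card (InfinitePlace F)
  set δ : ℝ := 1 / (8 * 4 ^ n) with hδ
  have hδ₀ : 0 < δ := by positivity
  have h4 : (1 : ℝ) ≤ 4 ^ n := one_le_pow₀ (by norm_num)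
  have hδ₁ : δ ≤ 1 / 8 := one_div_le_one_div_of_le (by norm_num) (by linarith)
  obtain ⟨c, hc, hcw⟩ := exists_abs_realEmb_lt w₀ hδ₀
  have hc₀ : c ≠ 0 := by
    rintro rfl
    norm_num at hc
  have hlarge : (4 : ℝ) ^ n < |realEmb w₀ c| := by
    have hnorm := one_le_abs_realEmb_mul_pow hc₀ fun w hw ↦ (hcw w hw).le
    have hpow : δ ^ (n - 1) ≤ δ :=
      (pow_le_pow_of_le_one hδ₀.le (by linarith) (by omega)).trans_eq (pow_one δ)
    have := hnorm.trans (mul_le_mul_of_nonneg_left hpow (abs_nonneg _))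
    rw [hδ, mul_one_div, one_le_div (by positivity)] at this
    linarith
  have hsmall (w : InfinitePlace F) (hw : w ≠ w₀) : |realEmb w c| ≤ 1 / 8 :=
    (hcw w hw).le.trans hδ₁
  rcases abs_choice (realEmb w₀ c) with hsign | hsign <;> rw [hsign] at hlarge
  · exact ⟨c, hsmall, hlarge⟩
  · exact ⟨-c, by simpa using hsmall, by simpa using hlarge⟩

namespace IsPellBase
variable {w₀ w : InfinitePlace F} {a : 𝓞 F} (ha : IsPellBase w₀ a)
include ha

theorem four_lt : 4 < realEmb w₀ a := by
  have : Nonempty (InfinitePlace F) := ⟨w₀⟩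
  exact (le_self_pow₀ (by norm_num) Fintype.card_ne_zero).trans_lt ha.lt_realEmb

theorem one_lt : 1 < realEmb w₀ a := by linarith [ha.four_lt]

theorem sq_le (hw : w ≠ w₀) : realEmb w a ^ 2 ≤ 1 / 64 := by
  rw [← sq_abs]
  exact (pow_le_pow_left₀ (abs_nonneg _) (ha.abs_le w hw) 2).trans_eq (by norm_num)

theorem pellY_ne_zero {k : ℤ} (hk : k ≠ 0) : pellY a k ≠ 0 := by
  rw [Ne, ← realEmb_eq_zero_iff (w := w₀), map_pellY]
  exact _root_.pellY_ne_zero ha.one_lt hk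

theorem one_le_realEmb_pellX (k : ℤ) : 1 ≤ realEmb w₀ (pellX a k) := by
  rw [map_pellX]
  exact one_le_pellX ha.one_lt.le k

theorem pellX_ne_zero (k : ℤ) : pellX a k ≠ 0 := by
  rw [Ne, ← realEmb_eq_zero_iff (w := w₀)]
  exact (zero_lt_one.trans_le (ha.one_le_realEmb_pellX k)).ne'

theorem abs_realEmb_pellX_le (hw : w ≠ w₀) (k : ℤ) : |realEmb w (pellX a k)| ≤ 1 :=
  abs_le_one_of_pell (map_pell _ (pell_identity a k)) ((ha.abs_le w hw).trans (by norm_num))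

theorem realEmb_pellY_sq_le (hw : w ≠ w₀) (k : ℤ) : realEmb w (pellY a k) ^ 2 ≤ 16 / 15 :=
  sq_le_of_pell (map_pell _ (pell_identity a k)) ((ha.abs_le w hw).trans (by norm_num))

end IsPellBase

end PellBase

section StepDown
open NumberField InfinitePlace

variable {F : Type*} [Field F] [NumberField F] [IsTotallyReal F]

namespace IsPellBase
variable {w₀ w : InfinitePlace F} {a : 𝓞 F} (ha : IsPellBase w₀ a) {m : ℕ}
include ha

theorem abs_realEmb_pellX_le_pellX {k : ℤ} (hk : |k| ≤ m) :
    |realEmb w₀ (pellX a k)| ≤ pellX (realEmb w₀ a) m := by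
  rw [abs_of_nonneg (zero_le_one.trans (ha.one_le_realEmb_pellX k)), map_pellX,
    pellX_le_pellX_iff ha.one_lt, Nat.abs_cast]
  exact hk

/-- A nonzero multiple of `pellX a (m + 1)` has a norm at least as large, which is impossible if it
is of the size of `pellX a m` at `w₀`. -/
theorem eq_zero_of_pellX_dvd {r : 𝓞 F}
    (hm : ∀ w ≠ w₀, 1 / 2 ≤ |realEmb w (pellX a (m + 1))|) (hr : pellX a (m + 1) ∣ r)
    (hr₀ : |realEmb w₀ r| ≤ 2 * pellX (realEmb w₀ a) m)
    (hrw : ∀ w ≠ w₀, |realEmb w r| ≤ 2) : r = 0 := by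
  by_contra hne
  set n := Fintype.card (InfinitePlace F) with hn
  set A := realEmb w₀ a
  have hX : 0 < pellX A m := zero_lt_one.trans_le (one_le_pellX ha.one_lt.le m)
  have hlarge : A * pellX A m ≤ |realEmb w₀ (pellX a (m + 1))| := by
    rw [map_pellX]
    exact (mul_pellX_le_pellX_add_one ha.one_lt.le m).trans (le_abs_self _)
  have hnorm : A * pellX A m * (1 / 2) ^ (n - 1) ≤ 2 * pellX A m * 2 ^ (n - 1) := calc
    _ ≤ |realEmb w₀ (pellX a (m + 1))| * (1 / 2) ^ (n - 1) := by gcongr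
    _ ≤ ∏ w, |realEmb w (pellX a (m + 1))| :=
      mul_pow_card_sub_one_le_prod w₀ (abs_nonneg _) (by norm_num) hm
    _ ≤ ∏ w, |realEmb w r| := prod_abs_realEmb_le_of_dvd hne hr
    _ ≤ |realEmb w₀ r| * 2 ^ (n - 1) :=
      prod_le_mul_pow_card_sub_one (fun _ ↦ abs_nonneg _) w₀ hrw
    _ ≤ 2 * pellX A m * 2 ^ (n - 1) := by gcongr
  have hA : A ≤ 2 * (2 ^ (n - 1) * 2 ^ (n - 1)) := by
    rw [one_div, inv_pow, ← div_eq_mul_inv, div_le_iff₀ (by positivity)] at hnorm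
    exact le_of_mul_le_mul_right (by linarith) hX
  have hbig := ha.lt_realEmb
  have hcard : n = (n - 1) + 1 := (Nat.succ_pred (Fintype.card_pos_iff.2 ⟨w₀⟩).ne').symm
  rw [← hn, hcard, pow_succ, show (4 : ℝ) = 2 * 2 by norm_num, mul_pow] at hbig
  have : (0 : ℝ) < 2 ^ (n - 1) * 2 ^ (n - 1) := by positivity
  linarith

theorem not_pellX_dvd_pellX (hm : ∀ w ≠ w₀, 1 / 2 ≤ |realEmb w (pellX a (m + 1))|) {k : ℤ}
    (hk : |k| ≤ m) : ¬ pellX a (m + 1) ∣ pellX a k := fun h ↦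
  have hX := (zero_le_one.trans (one_le_pellX ha.one_lt.le m))
  ha.pellX_ne_zero k <| ha.eq_zero_of_pellX_dvd hm h
    ((ha.abs_realEmb_pellX_le_pellX hk).trans (le_mul_of_one_le_left hX one_le_two))
    fun _ hw ↦ (ha.abs_realEmb_pellX_le hw k).trans one_le_two

theorem abs_eq_abs_of_congrUpToSign (hm : ∀ w ≠ w₀, 1 / 2 ≤ |realEmb w (pellX a (m + 1))|)
    {k l : ℤ} (hk : |k| ≤ m) (hl : |l| ≤ m)
    (h : CongrUpToSign (pellX a (m + 1)) (pellX a k) (pellX a l)) : |k| = |l| := by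
  have hk₀ := ha.abs_realEmb_pellX_le_pellX hk
  have hl₀ := ha.abs_realEmb_pellX_le_pellX hl
  rcases h with h | h
  · have hzero := ha.eq_zero_of_pellX_dvd hm h
      (by rw [map_sub]; exact (abs_sub _ _).trans (by linarith)) fun w hw ↦ by
        rw [map_sub]
        exact (abs_sub _ _).trans
          (by linarith [ha.abs_realEmb_pellX_le hw k, ha.abs_realEmb_pellX_le hw l])
    rw [← pellX_eq_pellX_iff ha.one_lt, ← map_pellX, ← map_pellX, sub_eq_zero.1 hzero]
  · have hzero := ha.eq_zero_of_pellX_dvd hm h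
      (by rw [map_add]; exact (abs_add_le _ _).trans (by linarith)) fun w hw ↦ by
        rw [map_add]
        exact (abs_add_le _ _).trans
          (by linarith [ha.abs_realEmb_pellX_le hw k, ha.abs_realEmb_pellX_le hw l])
    have hsum := congrArg (realEmb w₀) hzero
    rw [map_add, map_zero] at hsum
    linarith [ha.one_le_realEmb_pellX k, ha.one_le_realEmb_pellX l]

theorem congrUpToSign_of_pellX {n : ℕ} (hn : ∀ w ≠ w₀, 1 / 2 ≤ |realEmb w (pellX a n)|) {k l : ℤ}
    (hl : |l| < n) (h : CongrUpToSign (pellX a n) (pellX a k) (pellX a l)) :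
    CongrUpToSign (2 * n : ℤ) k l := by
  obtain ⟨m, rfl⟩ : ∃ m, n = m + 1 :=
    Nat.exists_eq_add_one.2 (Int.natCast_pos.1 ((abs_nonneg l).trans_lt hl))
  push_cast at *
  obtain ⟨r, e, rfl, hr⟩ : ∃ r e : ℤ, k = r + 2 * (m + 1) * e ∧ |r| ≤ m + 1 := by
    have hlb := Int.le_bmod (x := k) (m := 2 * (m + 1)) (by omega)
    have hub := Int.bmod_le (x := k) (m := 2 * (m + 1)) (by omega)
    have hdiv := Int.bmod_add_bdiv k (2 * (m + 1))
    push_cast at hdiv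
    exact ⟨_, _, hdiv.symm, _root_.abs_le.2 ⟨by omega, by omega⟩⟩
  have hrl := (congrUpToSign_pellX_add_two_mul a r (m + 1) e).symm.trans h
  have hne : |r| ≠ m + 1 := by
    intro heq
    rw [← pellX_natAbs a r, Int.natCast_natAbs, heq] at hrl
    refine ha.not_pellX_dvd_pellX hn (Int.lt_add_one_iff.1 hl) ?_
    rcases hrl with hdvd | hdvd
    · exact (dvd_sub_right dvd_rfl).1 hdvd
    · exact (dvd_add_right dvd_rfl).1 hdvd
  have habs := ha.abs_eq_abs_of_congrUpToSign hn (Int.lt_add_one_iff.1 (hr.lt_of_ne hne))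
    (Int.lt_add_one_iff.1 hl) hrl
  refine CongrUpToSign.trans (.of_dvd_sub ?_) (.of_eq_or_eq_neg (abs_eq_abs.1 habs))
  simp

end IsPellBase

end StepDown

section Recurrence
open NumberField InfinitePlace

theorem exists_ne_map_eq_and_dist_lt {ι α X : Type*} [Infinite ι] [Finite α] [PseudoMetricSpace X]
    (f : ι → α) {g : ι → X} (hg : TotallyBounded (Set.range g)) {ε : ℝ} (hε : 0 < ε) :
    ∃ k l, k ≠ l ∧ f k = f l ∧ dist (g k) (g l) < ε := by
  obtain ⟨t, ht, hcover⟩ := Metric.totallyBounded_iff.1 hg (ε / 2) (half_pos hε)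
  have : Finite t := ht
  have hcenter (k : ι) : ∃ c : t, dist (g k) c < ε / 2 := by
    simpa using hcover (Set.mem_range_self k)
  choose c hc using hcenter
  obtain ⟨k, l, hne, heq⟩ := Finite.exists_ne_map_eq_of_infinite fun k ↦ (f k, c k)
  obtain ⟨hf, hcc⟩ := Prod.ext_iff.1 heq
  refine ⟨k, l, hne, hf, (dist_triangle_right _ _ (c k : X)).trans_lt ?_⟩
  linarith [hc k, (congrArg (fun x : t ↦ dist (g l) x) hcc).trans_lt (hc l)]

theorem abs_pellX_sub_sub_one_le {A : ℝ} (hA : |A| ≤ 1 / 4) (k l : ℤ) :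
    |pellX A (k - l) - 1| ≤ |pellX A k - pellX A l| + 2 * |pellY A k - pellY A l| := by
  have hpell := pell_identity A l
  have hX : |pellX A l| ≤ 1 := abs_le_one_of_pell hpell (by linarith)
  have hY : |pellY A l| ≤ 2 := abs_le_of_sq_le_sq ((sq_le_of_pell hpell hA).trans (by norm_num))
    (by norm_num)
  have hA₂ : |1 - A ^ 2| ≤ 1 := by
    have : A ^ 2 ≤ 1 := (sq_le_one_iff_abs_le_one A).2 (by linarith)
    rw [abs_of_nonneg] <;> linarith [sq_nonneg A]
  calc |pellX A (k - l) - 1|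
      = |pellX A l * (pellX A k - pellX A l) +
          (1 - A ^ 2) * pellY A l * (pellY A k - pellY A l)| := by
        rw [pellX_sub]
        congr 1
        linear_combination hpell
    _ ≤ |pellX A l| * |pellX A k - pellX A l| +
          |1 - A ^ 2| * |pellY A l| * |pellY A k - pellY A l| := by
        rw [← abs_mul, ← abs_mul, ← abs_mul]
        exact abs_add_le _ _
    _ ≤ 1 * |pellX A k - pellX A l| + 1 * 2 * |pellY A k - pellY A l| := by gcongr
    _ = _ := by ring

variable {F : Type*} [Field F] [NumberField F] [IsTotallyReal F]

theorem IsPellBase.totallyBounded_range_pell {w₀ : InfinitePlace F} {a : 𝓞 F}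
    (ha : IsPellBase w₀ a) :
    TotallyBounded (Set.range fun (k : ℕ) (w : {w // w ≠ w₀}) ↦
      (pellX (realEmb w a) k, pellY (realEmb w a) k)) := by
  classical
  refine (isCompact_closedBall (0 : {w // w ≠ w₀} → ℝ × ℝ) 2).totallyBounded.subset ?_
  rintro _ ⟨k, rfl⟩
  rw [mem_closedBall_zero_iff, pi_norm_le_iff_of_nonneg zero_le_two]
  refine fun w ↦ norm_prod_le_iff.2 ⟨?_, ?_⟩
  · simpa only [map_pellX, Real.norm_eq_abs] using
      (ha.abs_realEmb_pellX_le w.2 k).trans one_le_two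
  · have := ha.realEmb_pellY_sq_le w.2 k
    rw [map_pellY] at this
    exact abs_le_of_sq_le_sq (this.trans (by norm_num)) zero_le_two

/-- The pairs `(pellX a k, pellY a k)` modulo `c` and at the places other than `w₀` range over a
finite and over a bounded set, so two of them nearly agree; subtract their indices. -/
theorem IsPellBase.exists_dvd_pellY_and_abs_sub_one_lt {w₀ : InfinitePlace F} {a c : 𝓞 F}
    (ha : IsPellBase w₀ a) (hc : c ≠ 0) {η : ℝ} (hη : 0 < η) :
    ∃ k : ℕ, k ≠ 0 ∧ c ∣ pellY a k ∧ ∀ w ≠ w₀, |realEmb w (pellX a k) - 1| < η := by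
  classical
  have : Finite (𝓞 F ⧸ Ideal.span {c}) :=
    Ring.HasFiniteQuotients.finiteQuotient (by simpa using hc)
  obtain ⟨k, l, hne, hres, hdist⟩ := exists_ne_map_eq_and_dist_lt
    (X := {w // w ≠ w₀} → ℝ × ℝ) (fun k : ℕ ↦ (Ideal.Quotient.mk (Ideal.span {c}) (pellX a k),
      Ideal.Quotient.mk (Ideal.span {c}) (pellY a k)))
    ha.totallyBounded_range_pell (ε := η / 3) (by positivity)
  have hdvd : c ∣ pellY a (k - l) := by
    obtain ⟨hX, hY⟩ := Prod.ext_iff.1 hres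
    rw [← Ideal.mem_span_singleton, ← Ideal.Quotient.eq_zero_iff_mem, pellY_sub, map_sub, map_mul,
      map_mul, show Ideal.Quotient.mk _ (pellX a k) = _ from hX,
      show Ideal.Quotient.mk _ (pellY a k) = _ from hY, mul_comm, sub_self]
  have hclose (w : InfinitePlace F) (hw : w ≠ w₀) : |realEmb w (pellX a (k - l)) - 1| < η := by
    have hw' := (dist_le_pi_dist _ _ ⟨w, hw⟩).trans_lt hdist
    rw [Prod.dist_eq, max_lt_iff, Real.dist_eq, Real.dist_eq] at hw'
    rw [map_pellX]
    linarith [abs_pellX_sub_sub_one_le ((ha.abs_le w hw).trans (by norm_num)) k l]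
  refine ⟨((k : ℤ) - l).natAbs, by omega, ?_, ?_⟩
  · rcases pellY_natAbs_eq_or a (k - l) with h | h <;> rw [h]
    · exact hdvd
    · exact hdvd.neg_right
  · simpa only [pellX_natAbs] using hclose

end Recurrence

section Denef
open NumberField InfinitePlace

variable {F : Type*} [Field F] [NumberField F]

/-- Denef's conditions on `ξ`, for a Pell base `a`. Up to sign, `x`, `u`, `p` and `s` are values of
`pellX`, with `y`, `v`, `q` and `t` the corresponding values of `pellY`, at `a` except for `s` and
`t`, which are at `b`. The divisibilities make `ξ` congruent up to sign, modulo the large number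
`z`, to the index of `x`. -/
def DenefCondition (a ξ : 𝓞 F) : Prop :=
  ∃ x y u v p q z b s t τ : 𝓞 F,
    x ^ 2 - (a ^ 2 - 1) * y ^ 2 = 1 ∧ u ^ 2 - (a ^ 2 - 1) * v ^ 2 = 1 ∧
    p ^ 2 - (a ^ 2 - 1) * q ^ 2 = 1 ∧ s ^ 2 - (b ^ 2 - 1) * t ^ 2 = 1 ∧
    z ∣ q ∧ q ^ 2 ∣ v ∧ z ∣ b - 1 ∧ u ∣ b - a ∧ u ∣ s - x ∧ z ∣ t - ξ ∧
    HasSumSqMultiple (z - (2 + ξ ^ 2) * (1 + x ^ 2) ^ Fintype.card (InfinitePlace F)) ∧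
    HasSumSqMultiple (4 * u ^ 2 - (1 + a ^ 2)) ∧
    HasSumSqMultiple (1 - 16 * b ^ 2 + (a ^ 2 - 1) * τ ^ 2)

theorem isDiophantine_denefCondition (a : 𝓞 F) :
    IsDiophantine fun v : Unit → 𝓞 F ↦ DenefCondition a (v ()) := by
  unfold DenefCondition
  repeat' apply IsDiophantine.exists_var
  repeat' apply IsDiophantine.and
  all_goals
    first
    | apply IsDiophantine.eq
    | apply IsDiophantine.dvd
    | apply isDiophantine_hasSumSqMultiple
  all_goals fun_prop

variable [IsTotallyReal F]

section Sound
variable (w₀ : InfinitePlace F) {x z ξ : 𝓞 F}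
  (hz : ∀ w, (2 + realEmb w ξ ^ 2) * (1 + realEmb w x ^ 2) ^ Fintype.card (InfinitePlace F) ≤
    realEmb w z)
include hz

theorem pow_mul_prod_le_prod_abs_realEmb :
    (1 + realEmb w₀ x ^ 2) ^ Fintype.card (InfinitePlace F) *
      ∏ w : InfinitePlace F, (2 + realEmb w ξ ^ 2) ≤ ∏ w : InfinitePlace F, |realEmb w z| := by
  set n := Fintype.card (InfinitePlace F)
  have hx (w : InfinitePlace F) : 1 ≤ (1 + realEmb w x ^ 2) ^ n :=
    one_le_pow₀ (le_add_of_nonneg_right (sq_nonneg _))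
  have hprod := mul_pow_card_sub_one_le_prod w₀ (by positivity) zero_le_one fun w _ ↦ hx w
  rw [one_pow, mul_one] at hprod
  calc (1 + realEmb w₀ x ^ 2) ^ n * ∏ w : InfinitePlace F, (2 + realEmb w ξ ^ 2)
      ≤ (∏ w : InfinitePlace F, (1 + realEmb w x ^ 2) ^ n) *
          ∏ w : InfinitePlace F, (2 + realEmb w ξ ^ 2) := by gcongr
    _ = ∏ w : InfinitePlace F, (2 + realEmb w ξ ^ 2) * (1 + realEmb w x ^ 2) ^ n := by
      rw [mul_comm, Finset.prod_mul_distrib]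
    _ ≤ ∏ w : InfinitePlace F, |realEmb w z| :=
      Finset.prod_le_prod (fun _ _ ↦ by positivity) fun w _ ↦ (hz w).trans (le_abs_self _)

theorem one_add_realEmb_sq_le_abs_intCast {m : ℤ} (hm : m ≠ 0) (h : z ∣ (m : 𝓞 F)) :
    1 + realEmb w₀ x ^ 2 ≤ |(m : ℝ)| := by
  have : Nonempty (InfinitePlace F) := ⟨w₀⟩
  have hξ : 1 ≤ ∏ w : InfinitePlace F, (2 + realEmb w ξ ^ 2) :=
    Finset.one_le_prod fun w _ ↦ by linarith [sq_nonneg (realEmb w ξ)]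
  refine le_of_pow_le_pow_left₀ (Fintype.card_ne_zero (α := InfinitePlace F)) (abs_nonneg _) ?_
  calc (1 + realEmb w₀ x ^ 2) ^ Fintype.card (InfinitePlace F)
      ≤ (1 + realEmb w₀ x ^ 2) ^ Fintype.card (InfinitePlace F) *
          ∏ w : InfinitePlace F, (2 + realEmb w ξ ^ 2) :=
        le_mul_of_one_le_right (by positivity) hξ
    _ ≤ ∏ w : InfinitePlace F, |realEmb w z| := pow_mul_prod_le_prod_abs_realEmb w₀ hz
    _ ≤ ∏ w : InfinitePlace F, |realEmb w (m : 𝓞 F)| :=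
      prod_abs_realEmb_le_of_dvd (Int.cast_ne_zero.2 hm) h
    _ = |(m : ℝ)| ^ Fintype.card (InfinitePlace F) := by simp

theorem eq_intCast_of_dvd_sub {c : ℤ} (hc : |(c : ℝ)| ≤ realEmb w₀ x ^ 2) (h : z ∣ ξ - c) :
    ξ = c := by
  by_contra hne
  set n := Fintype.card (InfinitePlace F)
  have hξ : ∏ w : InfinitePlace F, (1 + |realEmb w ξ|) <
      ∏ w : InfinitePlace F, (2 + realEmb w ξ ^ 2) := by
    refine Finset.prod_lt_prod_of_nonempty (fun w _ ↦ by positivity) (fun w _ ↦ ?_)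
      ⟨w₀, Finset.mem_univ _⟩
    rw [← sq_abs (realEmb w ξ)]
    nlinarith [sq_nonneg (|realEmb w ξ| - 1 / 2)]
  refine lt_irrefl ((1 + |(c : ℝ)|) ^ n * ∏ w : InfinitePlace F, (2 + realEmb w ξ ^ 2)) ?_
  calc (1 + |(c : ℝ)|) ^ n * ∏ w : InfinitePlace F, (2 + realEmb w ξ ^ 2)
      ≤ (1 + realEmb w₀ x ^ 2) ^ n * ∏ w : InfinitePlace F, (2 + realEmb w ξ ^ 2) :=
        mul_le_mul_of_nonneg_right (pow_le_pow_left₀ (by positivity) (by linarith) n)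
          (Finset.prod_nonneg fun w _ ↦ by positivity)
    _ ≤ ∏ w : InfinitePlace F, |realEmb w z| := pow_mul_prod_le_prod_abs_realEmb w₀ hz
    _ ≤ ∏ w : InfinitePlace F, |realEmb w (ξ - c)| :=
      prod_abs_realEmb_le_of_dvd (sub_ne_zero.2 hne) h
    _ ≤ ∏ w : InfinitePlace F, (1 + |(c : ℝ)|) * (1 + |realEmb w ξ|) := by
      refine Finset.prod_le_prod (fun _ _ ↦ abs_nonneg _) fun w _ ↦ ?_
      rw [map_sub, map_intCast]
      refine (abs_sub _ _).trans ?_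
      nlinarith [abs_nonneg (realEmb w ξ), abs_nonneg (c : ℝ)]
    _ = (1 + |(c : ℝ)|) ^ n * ∏ w : InfinitePlace F, (1 + |realEmb w ξ|) := by
      rw [Finset.prod_mul_distrib, Finset.prod_const, Finset.card_univ]
    _ < _ := mul_lt_mul_of_pos_left hξ (by positivity)

end Sound

theorem one_lt_abs_realEmb_of_forall_abs_le {w₀ : InfinitePlace F} {b : 𝓞 F}
    (hcard : 2 ≤ Fintype.card (InfinitePlace F)) (hb : b ≠ 0)
    (hbw : ∀ w ≠ w₀, |realEmb w b| ≤ 1 / 4) : 1 < |realEmb w₀ b| := by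
  have hnorm := one_le_abs_realEmb_mul_pow hb hbw
  have hpow : (1 / 4 : ℝ) ^ (Fintype.card (InfinitePlace F) - 1) ≤ 1 / 4 :=
    pow_le_of_le_one (by norm_num) (by norm_num) (by omega)
  linarith [hnorm.trans (mul_le_mul_of_nonneg_left hpow (abs_nonneg _))]

namespace IsPellBase
variable {w₀ w : InfinitePlace F} {a : 𝓞 F} (ha : IsPellBase w₀ a)
include ha

theorem exists_nat_eq_or_eq_neg {x y : 𝓞 F} (h : x ^ 2 - (a ^ 2 - 1) * y ^ 2 = 1) :
    ∃ k : ℕ, (x = pellX a k ∨ x = -pellX a k) ∧ (y = pellY a k ∨ y = -pellY a k) :=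
  exists_eq_or_eq_neg_pell (ha.one_lt.trans_le (le_abs_self _))
    (fun w hw ↦ (ha.abs_le w hw).trans (by norm_num)) h

theorem dvd_natCast_of_dvd_pellY {z q v : 𝓞 F} {l m : ℕ} (hm : m ≠ 0)
    (hq : q = pellY a l ∨ q = -pellY a l) (hv : v = pellY a m ∨ v = -pellY a m) (hzq : z ∣ q)
    (hqv : q ^ 2 ∣ v) : z ∣ (m : 𝓞 F) := by
  have hlm : pellY a l ^ 2 ∣ pellY a m := by
    rcases hq with rfl | rfl <;> rcases hv with rfl | rfl <;> simpa using hqv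
  have hl := pellY_dvd_intCast_of_sq_dvd a l m (ha.pellY_ne_zero (by exact_mod_cast hm)) hlm
  refine dvd_trans ?_ (mod_cast hl)
  rcases hq with rfl | rfl <;> simpa using hzq

theorem abs_realEmb_le_of_mul_sq_le {b τ : 𝓞 F} (hw : w ≠ w₀)
    (h : 0 ≤ realEmb w (1 - 16 * b ^ 2 + (a ^ 2 - 1) * τ ^ 2)) : |realEmb w b| ≤ 1 / 4 := by
  simp only [map_sub, map_mul, map_add, map_pow, map_one, map_ofNat] at h
  refine abs_le_of_sq_le_sq ?_ (by norm_num)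
  nlinarith [mul_nonneg (show 0 ≤ 1 - realEmb w a ^ 2 by linarith [ha.sq_le hw])
    (sq_nonneg (realEmb w τ))]

/-- Modulo `u`, which is `pellX a m` up to sign, `pellX a k` is congruent to `pellX b k`, and modulo
`z` the index `k` is congruent to `pellY b k`. -/
theorem congrUpToSign_of_pell {b s t x u z ξ : 𝓞 F} {j k m : ℕ} (hjm : j < m)
    (hm : ∀ w ≠ w₀, 1 / 2 ≤ |realEmb w (pellX a m)|) (hx : x = pellX a j ∨ x = -pellX a j)
    (hu : u = pellX a m ∨ u = -pellX a m) (hs : s = pellX b k ∨ s = -pellX b k)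
    (ht : t = pellY b k ∨ t = -pellY b k) (hzm : z ∣ (m : 𝓞 F)) (hzb : z ∣ b - 1)
    (hub : u ∣ b - a) (hus : u ∣ s - x) (hzt : z ∣ t - ξ) : CongrUpToSign z ξ (j : 𝓞 F) := by
  have hu_dvd {r : 𝓞 F} (hr : u ∣ r) : pellX a m ∣ r := by
    rcases hu with rfl | rfl <;> simpa using hr
  have hX : CongrUpToSign (pellX a m) (pellX a k) (pellX a j) :=
    CongrUpToSign.of_dvd_sub (dvd_pellX_sub_pellX k (hu_dvd hub)) |>.symm
      |>.trans (CongrUpToSign.of_eq_or_eq_neg hs).symm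
      |>.trans (.of_dvd_sub (hu_dvd hus)) |>.trans (.of_eq_or_eq_neg hx)
  have hkj : CongrUpToSign z (k : 𝓞 F) (j : 𝓞 F) := by
    have h := (ha.congrUpToSign_of_pellX hm (by simpa using hjm) hX).intCast (R := 𝓞 F)
    push_cast at h
    exact h.of_dvd (hzm.mul_left 2)
  have hk : z ∣ pellY b k - k := by simpa [pellY_one_left] using dvd_pellY_sub_pellY k hzb
  exact CongrUpToSign.of_dvd_sub hzt |>.symm |>.trans (.of_eq_or_eq_neg ht)
    |>.trans (.of_dvd_sub hk) |>.trans hkj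

theorem natCast_lt_realEmb_sq {x : 𝓞 F} {j : ℕ} (hx : x = pellX a j ∨ x = -pellX a j) :
    (j : ℝ) < realEmb w₀ x ^ 2 := by
  have hj := abs_lt_pellX (by linarith [ha.four_lt]) j (A := realEmb w₀ a)
  rw [← map_pellX, Int.cast_natCast, Nat.abs_cast] at hj
  have hsq := hj.trans_le (le_self_pow₀ (ha.one_le_realEmb_pellX j) two_ne_zero)
  rcases hx with rfl | rfl
  · exact hsq
  · rwa [map_neg, neg_sq]

theorem exists_intCast_eq_of_denefCondition (hcard : 2 ≤ Fintype.card (InfinitePlace F)) {ξ : 𝓞 F}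
    (h : DenefCondition a ξ) : ∃ c : ℤ, ξ = c := by
  obtain ⟨x, y, u, v, p, q, z, b, s, t, τ, hxy, huv, hpq, hst, hzq, hqv, hzb, hub, hus, hzt, hz,
    hu, hb⟩ := h
  replace hz (w : InfinitePlace F) := hz.realEmb_nonneg w
  replace hu (w : InfinitePlace F) := hu.realEmb_nonneg w
  simp only [map_sub, map_mul, map_add, map_pow, map_one, map_ofNat, sub_nonneg] at hz hu
  obtain ⟨j, hxj, -⟩ := ha.exists_nat_eq_or_eq_neg hxy
  obtain ⟨m, hum, hvm⟩ := ha.exists_nat_eq_or_eq_neg huv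
  obtain ⟨l, -, hql⟩ := ha.exists_nat_eq_or_eq_neg hpq
  have hpellX (w : InfinitePlace F) : 1 + realEmb w a ^ 2 ≤ 4 * |realEmb w (pellX a m)| ^ 2 := by
    rw [sq_abs]
    rcases hum with rfl | rfl <;> simpa using hu w
  have hm₀ : m ≠ 0 := by
    rintro rfl
    have := hpellX w₀
    simp only [Nat.cast_zero, pellX_zero, map_one, abs_one] at this
    nlinarith [ha.four_lt]
  have hm (w : InfinitePlace F) (_ : w ≠ w₀) : 1 / 2 ≤ |realEmb w (pellX a m)| :=
    le_of_sq_le_sq (by linarith [hpellX w, sq_nonneg (realEmb w a)]) (abs_nonneg _)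
  have hzm := ha.dvd_natCast_of_dvd_pellY hm₀ hql hvm hzq hqv
  have hj := ha.natCast_lt_realEmb_sq hxj
  have hjm : j < m := by
    have := one_add_realEmb_sq_le_abs_intCast w₀ hz (m := m) (mod_cast hm₀) (mod_cast hzm)
    rw [Int.cast_natCast, Nat.abs_cast] at this
    have hlt : (j : ℝ) < m := by linarith
    exact_mod_cast hlt
  have hbw (w : InfinitePlace F) (hw : w ≠ w₀) : |realEmb w b| ≤ 1 / 4 :=
    ha.abs_realEmb_le_of_mul_sq_le hw (hb.realEmb_nonneg w)
  have hb₀ : b ≠ 0 := by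
    rintro rfl
    have := one_add_realEmb_sq_le_abs_intCast w₀ hz one_ne_zero (by simpa using hzb)
    rw [Int.cast_one, abs_one] at this
    linarith [j.cast_nonneg (α := ℝ)]
  obtain ⟨k, hsk, htk⟩ := exists_eq_or_eq_neg_pell
    (one_lt_abs_realEmb_of_forall_abs_le hcard hb₀ hbw) hbw hst
  rcases ha.congrUpToSign_of_pell hjm hm hxj hum hsk htk hzm hzb hub hus hzt with h | h
  · exact ⟨j, eq_intCast_of_dvd_sub w₀ hz (by simpa using hj.le) (mod_cast h)⟩
  · exact ⟨-j, eq_intCast_of_dvd_sub w₀ hz (by simpa using hj.le) (by simpa using h)⟩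

end IsPellBase

end Denef

section Complete
open NumberField InfinitePlace Filter

variable {F : Type*} [Field F] [NumberField F] [IsTotallyReal F]

namespace IsPellBase
variable {w₀ w : InfinitePlace F} {a : 𝓞 F} (ha : IsPellBase w₀ a)
include ha

/-- At the places other than `w₀`, choose `r` with `pellX a r` near `1`, where `pellY` takes the
value `D` at index `D`. -/
theorem exists_forall_lt_realEmb_pellY (B : ℝ) :
    ∃ r D : ℕ, r ≠ 0 ∧ D ≠ 0 ∧ ∀ w, B < realEmb w (pellY (pellX a r) D) := by
  obtain ⟨D, hD⟩ := exists_nat_gt (max B 0)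
  obtain ⟨hBD, hD₀⟩ := max_lt_iff.1 hD
  have hcont : Continuous fun t : ℝ ↦ pellY t D := Polynomial.continuous _
  have hnear : ∀ᶠ t in nhds (1 : ℝ), B < pellY t D :=
    hcont.continuousAt.eventually_const_lt (by simpa [pellY_one_left] using hBD)
  obtain ⟨η, hη, hball⟩ := Metric.eventually_nhds_iff.1 hnear
  obtain ⟨r, hr, -, hclose⟩ := ha.exists_dvd_pellY_and_abs_sub_one_lt one_ne_zero hη
  refine ⟨r, D, hr, by exact_mod_cast hD₀.ne', fun w ↦ ?_⟩
  rw [map_pellY]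
  obtain rfl | hw := eq_or_ne w w₀
  · exact hBD.trans_le (natCast_le_pellY (ha.one_le_realEmb_pellX r) D)
  · exact hball (hclose w hw)

theorem realEmb_pellX_sq_lt_one (hw : w ≠ w₀) {k : ℤ} (hk : k ≠ 0) :
    realEmb w (pellX a k) ^ 2 < 1 := by
  have hpell := map_pell (realEmb w) (pell_identity a k)
  have hY : 0 < realEmb w (pellY a k) ^ 2 :=
    sq_pos_of_ne_zero (realEmb_eq_zero_iff.not.2 (ha.pellY_ne_zero hk))
  nlinarith [ha.sq_le hw]

theorem one_add_realEmb_sq_lt {k : ℤ} (hk : k ≠ 0)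
    (hclose : ∀ w ≠ w₀, |realEmb w (pellX a k) - 1| < 1 / 4) (w : InfinitePlace F) :
    1 + realEmb w a ^ 2 < 4 * realEmb w (pellX a k) ^ 2 := by
  obtain rfl | hw := eq_or_ne w w₀
  · have hle := le_pellX ha.one_lt hk
    rw [← map_pellX] at hle
    nlinarith [ha.one_lt]
  · have := neg_lt_of_abs_lt (hclose w hw)
    nlinarith [ha.sq_le hw]

theorem exists_dvd_sub_and_abs_le {u : 𝓞 F} (hu : ∀ w ≠ w₀, realEmb w u ^ 2 < 1) :
    ∃ b, u ∣ b - a ∧ u ^ 2 - 1 ∣ b - 1 ∧ ∀ w ≠ w₀, |realEmb w b| ≤ 3 / 16 := by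
  have hsmall : ∀ᶠ q : ℕ in atTop, ∀ w ≠ w₀, (realEmb w u ^ 2) ^ q < 1 / 16 := by
    simp only [eventually_all]
    exact fun w hw ↦ (tendsto_pow_atTop_nhds_zero_of_lt_one
      (sq_nonneg _) (hu w hw)).eventually_lt_const (by norm_num)
  obtain ⟨q, hq, hq₀⟩ := (hsmall.and (eventually_ne_atTop 0)).exists
  refine ⟨(u ^ 2) ^ q + a * (1 - u ^ 2), ?_, ?_, fun w hw ↦ ?_⟩
  · have hpow : u ∣ (u ^ 2) ^ q := (dvd_pow_self u two_ne_zero).trans (dvd_pow_self _ hq₀)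
    convert hpow.sub (dvd_mul_right u (a * u)) using 1
    ring
  · convert (sub_one_dvd_pow_sub_one (u ^ 2) q).sub (dvd_mul_left (u ^ 2 - 1) a) using 1
    ring
  · simp only [map_add, map_mul, map_sub, map_one, map_pow]
    have ha' := ha.abs_le w hw
    have hu' : 0 < 1 - realEmb w u ^ 2 := sub_pos.2 (hu w hw)
    calc |(realEmb w u ^ 2) ^ q + realEmb w a * (1 - realEmb w u ^ 2)|
        ≤ (realEmb w u ^ 2) ^ q + |realEmb w a| * (1 - realEmb w u ^ 2) := by
          refine (abs_add_le _ _).trans_eq ?_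
          rw [abs_mul, abs_of_pos hu', abs_of_nonneg (by positivity)]
      _ ≤ 1 / 16 + 1 / 8 * 1 := by
          gcongr
          · exact (hq w hw).le
          · linarith [sq_nonneg (realEmb w u)]
      _ = 3 / 16 := by norm_num

theorem exists_forall_realEmb_pos {b : 𝓞 F} (hb : ∀ w ≠ w₀, |realEmb w b| ≤ 3 / 16) :
    ∃ τ : 𝓞 F, ∀ w, 0 < realEmb w (1 - 16 * b ^ 2 + (a ^ 2 - 1) * τ ^ 2) := by
  obtain ⟨Q, hQ, hQ₀⟩ := ((tendsto_pow_atTop_atTop_of_one_lt ha.one_lt).eventually_gt_atTop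
    (16 * realEmb w₀ b ^ 2) |>.and (eventually_ne_atTop 0)).exists
  refine ⟨a ^ Q, fun w ↦ ?_⟩
  simp only [map_add, map_mul, map_sub, map_one, map_pow, map_ofNat]
  obtain rfl | hw := eq_or_ne w w₀
  · have hle := le_self_pow₀ (one_le_pow₀ ha.one_lt.le : 1 ≤ realEmb w a ^ Q) two_ne_zero
    have ha' : 1 ≤ realEmb w a ^ 2 - 1 := by nlinarith [ha.four_lt]
    nlinarith [le_mul_of_one_le_left (sq_nonneg (realEmb w a ^ Q)) ha']
  · have hb' : realEmb w b ^ 2 ≤ (3 / 16) ^ 2 := sq_le_sq' (neg_le_of_abs_le (hb w hw))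
      (le_of_abs_le (hb w hw))
    have hτ : (realEmb w a ^ Q) ^ 2 ≤ 1 / 64 := by
      rw [← pow_mul, mul_comm, pow_mul]
      exact (pow_le_of_le_one (sq_nonneg _) ((ha.sq_le hw).trans (by norm_num)) hQ₀).trans
        (ha.sq_le hw)
    nlinarith [mul_nonneg (sq_nonneg (realEmb w a)) (sq_nonneg (realEmb w a ^ Q))]

theorem denefCondition_intCast (j : ℤ) : DenefCondition a (j : 𝓞 F) := by
  set P : 𝓞 F := (2 + (j : 𝓞 F) ^ 2) * (1 + pellX a j ^ 2) ^ Fintype.card (InfinitePlace F)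
  have : Nonempty (InfinitePlace F) := ⟨w₀⟩
  obtain ⟨wmax, hmax⟩ := Finite.exists_max fun w ↦ realEmb w P
  obtain ⟨r, D, hr, hD, hz⟩ := ha.exists_forall_lt_realEmb_pellY (realEmb wmax P)
  set z := pellY (pellX a r) D
  have hzq : z ∣ pellY a (r * D) := pellY_mul a r D ▸ dvd_mul_left _ _
  have hq : pellY a (r * D) ≠ 0 := ha.pellY_ne_zero (by positivity)
  obtain ⟨m, hm, hqv, hclose⟩ :=
    ha.exists_dvd_pellY_and_abs_sub_one_lt (pow_ne_zero 2 hq) (η := 1 / 4) (by norm_num)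
  have hm' : (m : ℤ) ≠ 0 := mod_cast hm
  obtain ⟨b, hub, hu₁b, hb⟩ :=
    ha.exists_dvd_sub_and_abs_le fun w hw ↦ ha.realEmb_pellX_sq_lt_one hw hm'
  obtain ⟨τ, hτ⟩ := ha.exists_forall_realEmb_pos hb
  have hzv : z ∣ pellY a m := hzq.trans ((dvd_pow_self _ two_ne_zero).trans hqv)
  have hzu₁ : z ∣ pellX a m ^ 2 - 1 := by
    rw [show pellX a m ^ 2 - 1 = (a ^ 2 - 1) * pellY a m * pellY a m by
      linear_combination pell_identity a m]
    exact hzv.mul_left _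
  have hzb := hzu₁.trans hu₁b
  refine ⟨pellX a j, pellY a j, pellX a m, pellY a m, pellX a (r * D), pellY a (r * D), z, b,
    pellX b j, pellY b j, τ, pell_identity a j, pell_identity a m, pell_identity a _,
    pell_identity b j, hzq, hqv, hzb, hub, dvd_pellX_sub_pellX j hub, ?_,
    hasSumSqMultiple_of_pos fun w ↦ ?_, hasSumSqMultiple_of_pos fun w ↦ ?_,
    hasSumSqMultiple_of_pos hτ⟩
  · simpa [pellY_one_left] using dvd_pellY_sub_pellY j hzb
  · rw [map_sub, sub_pos]
    exact (hmax w).trans_lt (hz w)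
  · simpa only [map_sub, map_mul, map_add, map_pow, map_one, map_ofNat, sub_pos] using
      ha.one_add_realEmb_sq_lt hm' hclose w

theorem mem_range_intCast_iff (hcard : 2 ≤ Fintype.card (InfinitePlace F)) {ξ : 𝓞 F} :
    ξ ∈ Set.range ((↑) : ℤ → 𝓞 F) ↔ DenefCondition a ξ :=
  ⟨fun ⟨j, hj⟩ ↦ hj ▸ ha.denefCondition_intCast j,
    fun h ↦ (ha.exists_intCast_eq_of_denefCondition hcard h).imp fun _ ↦ Eq.symm⟩

end IsPellBase

end Complete

section DenefTheorem
open NumberField InfinitePlace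

theorem range_intCast_eq_univ_of_finrank_eq_one {F : Type*} [Field F] [NumberField F]
    (h : Module.finrank ℚ F = 1) : Set.range ((↑) : ℤ → 𝓞 F) = Set.univ := by
  refine Set.eq_univ_of_forall fun x ↦ ?_
  obtain ⟨q, hq⟩ := (finrank_eq_one_iff_of_nonzero' (1 : F) one_ne_zero).1 h x
  rw [← Algebra.algebraMap_eq_smul_one] at hq
  have hint : IsIntegral ℤ q := by
    rw [← isIntegral_algebraMap_iff (algebraMap ℚ F).injective, hq]
    exact RingOfIntegers.isIntegral_coe x
  obtain ⟨n, rfl⟩ := IsIntegrallyClosed.isIntegral_iff.1 hint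
  exact ⟨n, RingOfIntegers.coe_injective (by simpa using hq)⟩

variable (F : Type*) [Field F] [NumberField F] [IsTotallyReal F]

theorem isDiophantineOver_range_intCast_of_isTotallyReal :
    IsDiophantineOver (𝓞 F) (Set.range ((↑) : ℤ → 𝓞 F)) := by
  obtain ⟨w₀⟩ := (inferInstance : Nonempty (InfinitePlace F))
  by_cases hcard : 2 ≤ Fintype.card (InfinitePlace F)
  · obtain ⟨a, ha⟩ := exists_isPellBase w₀ hcard
    exact isDiophantineOver_iff.2
      ((isDiophantine_denefCondition a).congr fun _ ↦ ha.mem_range_intCast_iff hcard)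
  · have hdeg : Module.finrank ℚ F = 1 := by
      have hpos := Module.finrank_pos (R := ℚ) (M := F)
      rw [card_infinitePlace_eq_finrank] at hcard
      omega
    rw [range_intCast_eq_univ_of_finrank_eq_one hdeg]
    exact isDiophantineOver_univ

end DenefTheorem

section GaloisDescent
open NumberField

section
variable {R S : Type*} [CommRing R] [CommRing S]

theorem IsDiophantineOver.range_intCast_of_range
    (hR : IsDiophantineOver R (Set.range ((↑) : ℤ → R))) {φ : R →+* S}
    (hφ : Function.Injective φ) (hrange : IsDiophantineOver S (Set.range φ)) :
    IsDiophantineOver S (Set.range ((↑) : ℤ → S)) := by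
  have h := hR.image hφ hrange
  simp only [← Set.range_comp, Function.comp_def, map_intCast] at h
  exact h

theorem IsDiophantineOver.range_intCast_of_algebra [Algebra R S] [FaithfulSMul R S]
    [Module.Finite R S] [Module.Projective R S]
    (hS : IsDiophantineOver S (Set.range ((↑) : ℤ → S))) :
    IsDiophantineOver R (Set.range ((↑) : ℤ → R)) := by
  convert hS.preimage_algebraMap (R := R) using 1
  ext x
  simp only [Set.mem_range, Set.mem_preimage, ← map_intCast (algebraMap R S),
    (FaithfulSMul.algebraMap_injective R S).eq_iff]

end

theorem exists_ringOfIntegers_algebraMap_eq_iff {K L : Type*} [Field K] [Field L] [Algebra K L]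
    {x : 𝓞 L} :
    (∃ y : 𝓞 K, algebraMap K L y = x) ↔ (x : L) ∈ Set.range (algebraMap K L) := by
  refine ⟨fun ⟨y, hy⟩ ↦ ⟨y, hy⟩, fun ⟨y, hy⟩ ↦ ?_⟩
  have hint : IsIntegral ℤ (algebraMap K L y) := hy ▸ x.isIntegral_coe
  exact ⟨⟨y, (isIntegral_algebraMap_iff (algebraMap K L).injective).1 hint⟩, hy⟩

variable {N : Type*} [Field N] [NumberField N]

theorem mem_fixedField_zpowers_iff {F E : Type*} [Field F] [Field E] [Algebra F E]
    {σ : E ≃ₐ[F] E} {x : E} :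
    x ∈ IntermediateField.fixedField (Subgroup.zpowers σ) ↔ σ x = x := by
  rw [IntermediateField.mem_fixedField_iff]
  refine ⟨fun h ↦ h σ (Subgroup.mem_zpowers σ), fun h τ hτ ↦ ?_⟩
  have hstab : Subgroup.zpowers σ ≤ MulAction.stabilizer (E ≃ₐ[F] E) x := by
    simpa [Subgroup.zpowers_le] using h
  exact hstab hτ

theorem isDiophantineOver_fixed_of_involutive
    (hquad : ∀ K : IntermediateField ℚ N, Module.finrank K N = 2 →
      IsDiophantineOver (𝓞 N) {x | (x : N) ∈ K})
    {σ : N ≃ₐ[ℚ] N} (hσ : Function.Involutive σ) :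
    IsDiophantineOver (𝓞 N) {x | σ x = x} := by
  by_cases hone : σ = 1
  · simpa [hone] using isDiophantineOver_univ
  have horder : orderOf σ = 2 := orderOf_eq_prime (by ext x; simp [pow_two, hσ x]) hone
  simpa only [mem_fixedField_zpowers_iff] using
    hquad (IntermediateField.fixedField (Subgroup.zpowers σ))
      (by rw [IntermediateField.finrank_fixedField_eq_card, Nat.card_zpowers, horder])

theorem exists_involutive_comp_eq_conj [IsGalois ℚ N] (φ : N →+* ℂ) :
    ∃ σ : N ≃ₐ[ℚ] N, Function.Involutive σ ∧ ∀ x, φ (σ x) = star (φ x) := by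
  obtain ⟨σ, hσ⟩ := ComplexEmbedding.exists_comp_symm_eq_of_comp_eq (k := ℚ) φ
    (ComplexEmbedding.conjugate φ) (by ext; simp)
  have hconj (x : N) : φ (σ.symm x) = star (φ x) := RingHom.congr_fun hσ x
  exact ⟨σ.symm, fun x ↦ φ.injective (by rw [hconj, hconj, star_star]), hconj⟩

theorem isDiophantineOver_range_maximalRealSubfield [IsGalois ℚ N]
    (hquad : ∀ K : IntermediateField ℚ N, Module.finrank K N = 2 →
      IsDiophantineOver (𝓞 N) {x | (x : N) ∈ K}) :
    IsDiophantineOver (𝓞 N) (Set.range (algebraMap (𝓞 (maximalRealSubfield N)) (𝓞 N))) := by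
  have hfix (φ : N →+* ℂ) : IsDiophantineOver (𝓞 N) {x | star (φ (x : N)) = φ x} := by
    obtain ⟨σ, hσ, hconj⟩ := exists_involutive_comp_eq_conj φ
    simpa only [← hconj, φ.injective.eq_iff] using isDiophantineOver_fixed_of_involutive hquad hσ
  convert IsDiophantineOver.iInter hfix using 1
  ext x
  have hmem : (∃ y : 𝓞 (maximalRealSubfield N), algebraMap _ (𝓞 N) y = x) ↔
      ∃ y : 𝓞 (maximalRealSubfield N), algebraMap _ N (y : maximalRealSubfield N) = x :=
    exists_congr fun y ↦ RingOfIntegers.ext_iff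
  simp only [Set.mem_range, hmem, exists_ringOfIntegers_algebraMap_eq_iff, Set.mem_iInter]
  refine ⟨?_, fun h ↦ ⟨⟨x, h⟩, rfl⟩⟩
  rintro ⟨y, hy : (y : N) = x⟩ φ
  simpa [hy] using y.2 φ

instance projective_ringOfIntegers (K L : Type*) [Field K] [NumberField K] [Field L]
    [NumberField L] [Algebra K L] : Module.Projective (𝓞 K) (𝓞 L) :=
  have := Module.finitePresentation_of_finite (𝓞 K) (𝓞 L)
  Module.Flat.projective_of_finitePresentation

universe u in
theorem exists_isGalois_extension (M : Type u) [Field M] [NumberField M] :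
    ∃ (N : Type u) (_ : Field N) (_ : NumberField N) (_ : Algebra M N), IsGalois ℚ N := by
  have : IsAlgClosure ℚ (AlgebraicClosure M) := ⟨inferInstance, .trans ℚ M _⟩
  have : Normal ℚ (AlgebraicClosure M) := IsAlgClosure.normal (R := ℚ) (K := AlgebraicClosure M)
  let N := IntermediateField.normalClosure ℚ M (AlgebraicClosure M)
  have : Normal ℚ N := normalClosure.normal ℚ M (AlgebraicClosure M)
  exact ⟨N, inferInstance, ⟨⟩, inferInstance, ⟨⟩⟩

end GaloisDescent

/-- If for every quadratic extension `L/K` of number fields the image of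
`𝒪_K` in `𝒪_L` has a diophantine definition over `𝒪_L`, then for every number field `M` the
image of `ℤ` in `𝒪_M` has a diophantine definition over `𝒪_M`. -/
theorem stmt_3
    (H : ∀ (K L : Type) [Field K] [NumberField K] [Field L] [NumberField L]
      [Algebra K L], Module.finrank K L = 2 →
      IsDiophantineOver (NumberField.RingOfIntegers L)
        {x : NumberField.RingOfIntegers L | ∃ y : NumberField.RingOfIntegers K,
          algebraMap K L (algebraMap (NumberField.RingOfIntegers K) K y)
            = algebraMap (NumberField.RingOfIntegers L) L x})
    (M : Type) [Field M] [NumberField M] :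
    IsDiophantineOver (NumberField.RingOfIntegers M)
      {x : NumberField.RingOfIntegers M | ∃ n : ℤ, (n : NumberField.RingOfIntegers M) = x} := by
  obtain ⟨N, _, _, _, _⟩ := exists_isGalois_extension M
  have hquad (K : IntermediateField ℚ N) (hK : Module.finrank K N = 2) :
      IsDiophantineOver (NumberField.RingOfIntegers N) {x | (x : N) ∈ K} := by
    convert H K N hK using 3 with x
    rw [exists_ringOfIntegers_algebraMap_eq_iff]
    simp
  refine IsDiophantineOver.range_intCast_of_algebra (S := NumberField.RingOfIntegers N) ?_
  have hreal :=
    isDiophantineOver_range_intCast_of_isTotallyReal (NumberField.maximalRealSubfield N)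
  exact hreal.range_intCast_of_range
    (FaithfulSMul.algebraMap_injective _ _) (isDiophantineOver_range_maximalRealSubfield hquad)
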